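/- arXiv:1112.2118 — 7 statements merged into one kernel-verified Lean document; each statement's English description precedes it below -/
import Mathlib

section
/- Let q(x) = exp(x) − x − 1 and Q(x) = x·(exp(x) − 1)/(exp(x) − x − 1). Then: (i) Q is strictly increasing on (0,∞); (ii) Q(x) > x for every x > 0; (iii) Q(x) → 2 as x → 0⁺. -/
/-- `q(x) = exp(x) - x - 1`. -/
noncomputable def q (x : ℝ) : ℝ := Real.exp x - x - 1

/-- `Q(x) = x·(exp(x) − 1)/(exp(x) − x − 1)`. -/
noncomputable def Qf (x : ℝ) : ℝ := x * (Real.exp x - 1) / (Real.exp x - x - 1)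

theorem q_pos_aux {x : ℝ} (hx : 0 < x) : 0 < Real.exp x - x - 1 := by
  have := Real.add_one_lt_exp hx.ne'
  linarith

theorem key_aux {x : ℝ} (hx : 0 < x) : x ^ 2 * Real.exp x < (Real.exp x - 1) ^ 2 := by
  have h1 : x / 2 < Real.sinh (x / 2) := Real.self_lt_sinh_iff.2 (by linarith)
  rw [Real.sinh_eq, Real.exp_neg] at h1
  have hs : Real.exp x = Real.exp (x / 2) ^ 2 := by
    rw [← Real.exp_nat_mul]; congr 1; push_cast; ring
  have hp := Real.exp_pos (x / 2)
  rw [hs]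
  set s := Real.exp (x / 2)
  have h2 : x * s < s ^ 2 - 1 := by
    have h3 : x < s - s⁻¹ := by linarith
    have h4 := mul_lt_mul_of_pos_right h3 hp
    have h5 : (s - s⁻¹) * s = s ^ 2 - 1 := by field_simp
    linarith
  have h6 : 0 < x * s := mul_pos hx hp
  nlinarith

theorem stmt0 :
    StrictMonoOn Qf (Set.Ioi (0:ℝ)) ∧
    (∀ x : ℝ, 0 < x → x < Qf x) ∧
    Filter.Tendsto Qf (nhdsWithin 0 (Set.Ioi (0:ℝ))) (nhds 2) := by
  refine ⟨?_, ?_, ?_⟩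
  · have hd : ∀ x ∈ Set.Ioi (0:ℝ), HasDerivAt Qf
        (((1 * (Real.exp x - 1) + x * Real.exp x) * (Real.exp x - x - 1)
          - x * (Real.exp x - 1) * (Real.exp x - 1)) / (Real.exp x - x - 1) ^ 2) x := by
      intro x hx
      have he := Real.hasDerivAt_exp x
      exact ((hasDerivAt_id x).mul (he.sub_const 1)).div
        ((he.sub (hasDerivAt_id x)).sub_const 1) (q_pos_aux hx).ne'
    apply strictMonoOn_of_deriv_pos (convex_Ioi 0)
    · exact fun x hx => (hd x hx).continuousAt.continuousWithinAt
    · intro x hx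
      rw [interior_Ioi] at hx
      rw [(hd x hx).deriv]
      have := key_aux hx
      apply div_pos _ (pow_pos (q_pos_aux hx) 2)
      nlinarith
  · intro x hx
    rw [Qf, lt_div_iff₀ (q_pos_aux hx)]
    nlinarith [mul_pos hx hx]
  · have hl : Filter.Tendsto (fun x : ℝ => 2 - 2 * x) (nhdsWithin 0 (Set.Ioi (0:ℝ))) (nhds 2) := by
      have : Continuous (fun x : ℝ => 2 - 2 * x) := by fun_prop
      simpa using (this.tendsto 0).mono_left nhdsWithin_le_nhds
    have hu : Filter.Tendsto (fun x : ℝ => 2 + x) (nhdsWithin 0 (Set.Ioi (0:ℝ))) (nhds 2) := by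
      have : Continuous (fun x : ℝ => 2 + x) := by fun_prop
      simpa using (this.tendsto 0).mono_left nhdsWithin_le_nhds
    have hm : Set.Ioo (0:ℝ) 1 ∈ nhdsWithin 0 (Set.Ioi (0:ℝ)) := Ioo_mem_nhdsGT one_pos
    refine tendsto_of_tendsto_of_tendsto_of_le_of_le' hl hu ?_ ?_
    · filter_upwards [hm] with x hx
      obtain ⟨h0, h1⟩ := hx
      rw [Qf, le_div_iff₀ (q_pos_aux h0)]
      have hb := Real.exp_bound' h0.le h1.le (n := 3) (by norm_num)
      norm_num [Finset.sum_range_succ, Nat.factorial] at hb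
      have hx3 : 0 < x ^ 3 := pow_pos h0 3
      have hq : Real.exp x - x - 1 ≤ x ^ 2 / 2 * (1 + x) := by nlinarith
      have h2 := mul_le_mul_of_nonneg_left hq (by linarith : 0 ≤ 2 - 2 * x)
      have h3 := mul_le_mul_of_nonneg_left (Real.add_one_le_exp x) h0.le
      nlinarith [sq_nonneg (x ^ 2)]
    · filter_upwards [hm] with x hx
      obtain ⟨h0, h1⟩ := hx
      rw [Qf, div_le_iff₀ (q_pos_aux h0)]
      nlinarith [Real.quadratic_le_exp_of_nonneg h0.le]
end

section
/- Let ε > 0 and C ≥ 2 + ε be constants. There exist constants 0 < c₁ ≤ c₂ such that for all positive integers m, n with (2+ε)·n ≤ m ≤ C·n, letting a > 0 be the unique solution of Q(a) = m/n, one has c₁·(m/(a·e))^m·q(a)^n ≤ M(m,n) ≤ c₂·(m/(a·e))^m·q(a)^n. -/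
/-- `M(m,n) = Σ m!/(v₁!⋯v_n!)`, the sum over all tuples `(v₁,…,v_n) ∈ ℕⁿ`
with all `vᵢ ≥ 2` and `v₁ + ⋯ + v_n = m`. -/
def M (m n : ℕ) : ℕ :=
  ∑ v ∈ (Finset.Nat.antidiagonalTuple n m).filter (fun v => ∀ i, 2 ≤ v i),
    Nat.multinomial Finset.univ v


namespace TPois

/-- weights `1/k!` for `k ≥ 2`. -/
noncomputable def wt (k : ℕ) : ℝ := if 2 ≤ k then 1 / (k.factorial : ℝ) else 0

/-- coefficients of `q^n`. -/
noncomputable def cc (n m : ℕ) : ℝ :=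
  ∑ v ∈ Finset.Nat.antidiagonalTuple n m, ∏ i, wt (v i)

lemma wt_nonneg (k : ℕ) : 0 ≤ wt k := by
  unfold wt; split_ifs <;> positivity

lemma M_eq (m n : ℕ) : (M m n : ℝ) = m.factorial * cc n m := by
  unfold M cc
  rw [Finset.sum_filter]
  push_cast
  rw [Finset.mul_sum]
  refine Finset.sum_congr rfl fun v hv => ?_
  rw [Finset.Nat.mem_antidiagonalTuple] at hv
  split_ifs with h
  · have h1 := Nat.multinomial_spec Finset.univ v
    rw [hv] at h1
    have h2 : ((∏ i, ((v i).factorial : ℝ))) * (Nat.multinomial Finset.univ v : ℝ)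
        = m.factorial := by exact_mod_cast h1
    have h3 : ∏ i, wt (v i) = (∏ i, ((v i).factorial : ℝ))⁻¹ := by
      rw [← Finset.prod_inv_distrib]
      refine Finset.prod_congr rfl fun i _ => ?_
      simp [wt, h i]
    rw [h3, ← h2]
    have : (∏ i, ((v i).factorial : ℝ)) ≠ 0 := by
      refine Finset.prod_ne_zero_iff.2 fun i _ => ?_
      positivity
    field_simp
  · push Not at h
    obtain ⟨i, hi⟩ := h
    have : ∏ i, wt (v i) = 0 := by
      refine Finset.prod_eq_zero (Finset.mem_univ i) ?_
      simp [wt, hi]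
    simp [this]

lemma cc_succ (n m : ℕ) :
    cc (n + 1) m = ∑ kl ∈ Finset.HasAntidiagonal.antidiagonal m, wt kl.1 * cc n kl.2 := by
  unfold cc
  simp_rw [Finset.mul_sum]
  rw [Finset.sum_sigma']
  symm
  refine Finset.sum_bij' (i := fun x _ => (Fin.cons x.1.1 x.2 : Fin (n+1) → ℕ))
    (j := fun v _ => ⟨(v 0, ∑ i, Fin.tail v i), Fin.tail v⟩) ?_ ?_ ?_ ?_ ?_
  · rintro ⟨⟨a, b⟩, v⟩ h
    simp [Finset.Nat.mem_antidiagonalTuple, Fin.sum_univ_succ] at h ⊢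
    omega
  · intro v h
    simp [Finset.Nat.mem_antidiagonalTuple, Fin.sum_univ_succ, Fin.tail] at h ⊢
    omega
  · rintro ⟨⟨a, b⟩, v⟩ h
    simp [Finset.Nat.mem_antidiagonalTuple] at h ⊢
    omega
  · intro v h
    simp
  · rintro ⟨⟨a, b⟩, v⟩ h
    simp [Fin.prod_univ_succ]

lemma hasSum_wt (z : ℂ) :
    HasSum (fun k => (wt k : ℂ) * z ^ k) (Complex.exp z - z - 1) := by
  have h := NormedSpace.expSeries_div_hasSum_exp (𝔸 := ℂ) z
  rw [← Complex.exp_eq_exp_ℂ] at h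
  rw [← hasSum_nat_add_iff' 2] at h ⊢
  convert h using 1
  · funext k
    simp [wt]
    ring
  · simp [Finset.sum_range_succ, wt]
    ring

lemma hasSum_wt_real (x : ℝ) :
    HasSum (fun k => wt k * x ^ k) (q x) := by
  have := hasSum_wt (x : ℂ)
  unfold q
  exact_mod_cast this

lemma summable_norm_wt (z : ℂ) : Summable (fun k => ‖(wt k : ℂ) * z ^ k‖) := by
  have := (hasSum_wt_real ‖z‖).summable
  refine this.congr fun k => ?_
  rw [norm_mul, norm_pow, Complex.norm_real, Real.norm_of_nonneg (wt_nonneg k)]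

lemma cc_hasSum (n : ℕ) (z : ℂ) : Summable (fun m => ‖(cc n m : ℂ) * z ^ m‖) ∧
    HasSum (fun m => (cc n m : ℂ) * z ^ m) ((Complex.exp z - z - 1) ^ n) := by
  induction n with
  | zero =>
    have h0 : ∀ m, m ≠ 0 → (cc 0 m : ℂ) * z ^ m = 0 := by
      intro m hm
      obtain ⟨k, rfl⟩ := Nat.exists_eq_succ_of_ne_zero hm
      simp [cc]
    constructor
    · refine (hasSum_single 0 ?_).summable
      intro m hm; rw [h0 m hm, norm_zero]
    · convert hasSum_single 0 h0 using 1
      simp [cc]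
  | succ n ih =>
    obtain ⟨ih1, ih2⟩ := ih
    have key : ∀ m, (cc (n+1) m : ℂ) * z ^ m = ∑ kl ∈ Finset.HasAntidiagonal.antidiagonal m,
        ((wt kl.1 : ℂ) * z ^ kl.1) * ((cc n kl.2 : ℂ) * z ^ kl.2) := by
      intro m
      rw [cc_succ]
      push_cast
      rw [Finset.sum_mul]
      refine Finset.sum_congr rfl fun kl h => ?_
      rw [Finset.HasAntidiagonal.mem_antidiagonal] at h
      rw [← h, pow_add]; ring
    have s := summable_norm_sum_mul_antidiagonal_of_summable_norm (summable_norm_wt z) ih1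
    simp_rw [key]
    refine ⟨s, ?_⟩
    have t := tsum_mul_tsum_eq_tsum_sum_antidiagonal_of_summable_norm (summable_norm_wt z) ih1
    rw [(hasSum_wt z).tsum_eq, ih2.tsum_eq] at t
    rw [pow_succ', t]
    exact s.of_norm.hasSum

lemma integral_exp_int (k : ℤ) : ∫ θ in (-Real.pi)..Real.pi, Complex.exp (k * θ * Complex.I)
    = if k = 0 then (2 * Real.pi : ℂ) else 0 := by
  split_ifs with h
  · subst h; simp; ring
  · have hc : (k * Complex.I : ℂ) ≠ 0 := by simp [h]
    have := integral_exp_mul_complex (a := -Real.pi) (b := Real.pi) hc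
    have e : ∀ θ : ℝ, (k * θ * Complex.I : ℂ) = k * Complex.I * θ := fun θ => by ring
    simp_rw [e]
    rw [this, div_eq_zero_iff]
    left
    rw [sub_eq_zero, Complex.exp_eq_exp_iff_exists_int]
    refine ⟨k, ?_⟩
    push_cast; ring

lemma cc_integral (n m : ℕ) (a : ℝ) :
    ∫ θ in (-Real.pi)..Real.pi,
      (Complex.exp (a * Complex.exp (θ * Complex.I)) - a * Complex.exp (θ * Complex.I) - 1) ^ n
        * Complex.exp (-(m * θ * Complex.I)) = 2 * Real.pi * (cc n m * a ^ m) := by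
  let f : ℕ → C(ℝ, ℂ) := fun k =>
    ⟨fun θ => (cc n k : ℂ) * (a * Complex.exp (θ * Complex.I)) ^ k
      * Complex.exp (-(m * θ * Complex.I)), by fun_prop⟩
  have hnorm : ∀ k (θ : ℝ), ‖f k θ‖ = ‖(cc n k : ℂ) * (a:ℂ) ^ k‖ := by
    intro k θ
    have e : (-(m * θ * Complex.I) : ℂ) = ((-(m * θ) : ℝ) : ℂ) * Complex.I := by push_cast; ring
    simp only [f, ContinuousMap.coe_mk]
    rw [e, norm_mul, Complex.norm_exp_ofReal_mul_I, norm_mul, norm_pow, norm_mul,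
      Complex.norm_exp_ofReal_mul_I, norm_mul, norm_pow]
    simp
  have hs : Summable fun k => ‖(f k).restrict
      (⟨Set.uIcc (-Real.pi) Real.pi, isCompact_uIcc⟩ : TopologicalSpace.Compacts ℝ)‖ := by
    refine Summable.of_nonneg_of_le (fun _ => norm_nonneg _) (fun k => ?_) (cc_hasSum n a).1
    rw [ContinuousMap.norm_le _ (norm_nonneg _)]
    intro x
    exact (hnorm k x).le
  have h1 := intervalIntegral.hasSum_intervalIntegral_of_summable_norm hs
  have h2 : ∀ θ : ℝ, ∑' k, f k θ =
      (Complex.exp (a * Complex.exp (θ * Complex.I)) - a * Complex.exp (θ * Complex.I) - 1) ^ n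
        * Complex.exp (-(m * θ * Complex.I)) := by
    intro θ
    exact ((cc_hasSum n (a * Complex.exp (θ * Complex.I))).2.mul_right _).tsum_eq
  simp_rw [h2] at h1
  have h3 : ∀ k, ∫ θ in (-Real.pi)..Real.pi, f k θ =
      if k = m then (2 * Real.pi * (cc n m * a ^ m) : ℂ) else 0 := by
    intro k
    have e : ∀ θ : ℝ, f k θ = (cc n k * a ^ k : ℂ) * Complex.exp (((k - m : ℤ) : ℂ) * θ * Complex.I) := by
      intro θ
      simp only [f, ContinuousMap.coe_mk]
      rw [mul_pow, ← Complex.exp_nat_mul, ← mul_assoc, mul_assoc _ (Complex.exp _), ← Complex.exp_add]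
      congr 2
      push_cast; ring
    simp_rw [e]
    rw [intervalIntegral.integral_const_mul, integral_exp_int]
    by_cases hk : k = m
    · subst hk; simp; ring
    · have : ((k - m : ℤ)) ≠ 0 := by omega
      simp [this, hk]
  simp_rw [h3] at h1
  refine h1.unique ?_
  convert hasSum_ite_eq m (2 * Real.pi * (cc n m * a ^ m) : ℂ) using 1

end TPois

namespace TPois

open Real in
lemma taylor_exp (x : ℝ) :
    ‖Complex.exp (x * Complex.I) - 1 - x * Complex.I + (x:ℂ) ^ 2 / 2‖ ≤ 4 * |x| ^ 3 := by
  have hn : ‖(x * Complex.I : ℂ)‖ = |x| := by simp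
  rcases le_total |x| 1 with h | h
  · have := Complex.exp_bound (x := x * Complex.I) (by rw [hn]; exact h) (n := 3) (by norm_num)
    rw [hn] at this
    have e : Complex.exp (x * Complex.I) - 1 - x * Complex.I + (x:ℂ) ^ 2 / 2 =
      Complex.exp (x * Complex.I)
        - ∑ m ∈ Finset.range 3, (x * Complex.I) ^ m / (m.factorial : ℂ) := by
      simp [Finset.sum_range_succ, mul_pow]; ring
    rw [e]
    refine this.trans ?_
    have h0 : 0 ≤ |x| ^ 3 := by positivity
    norm_num [Nat.factorial]
    nlinarith
  · have h1 : ‖Complex.exp (x * Complex.I) - 1 - x * Complex.I + (x:ℂ) ^ 2 / 2‖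
        ≤ 1 + 1 + |x| + |x| ^ 2 / 2 := by
      refine (norm_add_le _ _).trans (add_le_add ((norm_sub_le _ _).trans (add_le_add
        ((norm_sub_le _ _).trans (add_le_add ?_ ?_)) ?_)) ?_)
      · rw [Complex.norm_exp_ofReal_mul_I]
      · simp
      · rw [hn]
      · simp
    refine h1.trans ?_
    have h2 : |x| ≤ |x| ^ 3 := le_self_pow₀ h (by norm_num)
    have h3 : |x| ^ 2 ≤ |x| ^ 3 := pow_le_pow_right₀ h (by norm_num)
    linarith

lemma char_bound {p : ℕ → ℝ} {d : ℝ} (hp : ∀ k, 0 ≤ p k) (h1 : HasSum p 1)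
    (hd : 0 < d) (h2 : d ≤ p 2) (h3 : d ≤ p 3) (θ : ℝ) (hθ : |θ| ≤ Real.pi) (z : ℂ)
    (hz : HasSum (fun k : ℕ => (p k : ℂ) * Complex.exp (k * θ * Complex.I)) z) :
    ‖z‖ ≤ Real.exp (-(d / Real.pi ^ 2) * θ ^ 2) := by
  set e : ℕ → ℂ := fun k => Complex.exp (k * θ * Complex.I) with he
  change HasSum (fun k : ℕ => (p k : ℂ) * e k) z at hz
  have hne : ∀ k, ‖e k‖ = 1 := by
    intro k
    have : (k * θ * Complex.I : ℂ) = ((k * θ : ℝ) : ℂ) * Complex.I := by push_cast; ring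
    simp only [he]
    rw [this, Complex.norm_exp_ofReal_mul_I]
  let r : ℕ → ℝ := fun k => p k - (if k = 2 then d else 0) - (if k = 3 then d else 0)
  have hr : HasSum r (1 - d - d) := (h1.sub (hasSum_ite_eq 2 d)).sub (hasSum_ite_eq 3 d)
  have hr0 : ∀ k, 0 ≤ r k := by
    intro k
    simp only [r]
    by_cases a2 : k = 2
    · subst a2; simp; linarith
    · by_cases a3 : k = 3
      · subst a3; simp; linarith
      · simp [a2, a3, hp k]
  have hz' : HasSum (fun k => (r k : ℂ) * e k) (z - d * e 2 - d * e 3) := by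
    have hh := (hz.sub (hasSum_ite_eq 2 (d * e 2 : ℂ))).sub (hasSum_ite_eq 3 (d * e 3 : ℂ))
    refine Eq.mp ?_ hh
    congr 1
    funext k
    simp only [r]
    by_cases a2 : k = 2
    · subst a2; simp; ring
    · by_cases a3 : k = 3
      · subst a3; simp; ring
      · simp [a2, a3]
  have hb : ‖z - d * e 2 - d * e 3‖ ≤ 1 - d - d := by
    refine hz'.norm_le_of_bounded hr fun k => ?_
    rw [norm_mul, hne, Complex.norm_real, Real.norm_of_nonneg (hr0 k), mul_one]
  have he23 : e 2 + e 3 = Complex.exp ((5 / 2 * θ : ℝ) * Complex.I) * (2 * Real.cos (θ / 2) : ℝ) := by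
    push_cast
    rw [Complex.two_cos, mul_add, ← Complex.exp_add, ← Complex.exp_add, add_comm]
    simp only [he]
    congr 2 <;> (push_cast; ring)
  have hcos0 : 0 ≤ Real.cos (θ / 2) := by
    apply Real.cos_nonneg_of_mem_Icc
    rw [abs_le] at hθ
    constructor <;> linarith [hθ.1, hθ.2]
  have hcos : Real.cos (θ / 2) ≤ 1 - 2 / Real.pi ^ 2 * (θ / 2) ^ 2 := by
    apply Real.cos_le_one_sub_mul_cos_sq
    rw [abs_div, abs_two]
    linarith [abs_nonneg θ]
  have hn23 : ‖(d * e 2 + d * e 3 : ℂ)‖ = d * (2 * Real.cos (θ / 2)) := by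
    rw [← mul_add, he23, norm_mul, norm_mul, Complex.norm_exp_ofReal_mul_I, Complex.norm_real,
      Complex.norm_real, Real.norm_of_nonneg hd.le, Real.norm_of_nonneg (by positivity), one_mul]
  have : ‖z‖ ≤ (1 - d - d) + d * (2 * Real.cos (θ / 2)) := by
    rw [← hn23]
    calc ‖z‖ = ‖(z - d * e 2 - d * e 3) + (d * e 2 + d * e 3)‖ := by congr 1; ring
      _ ≤ _ := (norm_add_le _ _).trans (by gcongr)
  have h4 : 1 + (-(d / Real.pi ^ 2) * θ ^ 2) ≤ Real.exp (-(d / Real.pi ^ 2) * θ ^ 2) := by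
    linarith [Real.add_one_le_exp (-(d / Real.pi ^ 2) * θ ^ 2)]
  refine this.trans (le_trans ?_ h4)
  have : d * (2 * Real.cos (θ / 2)) ≤ d * (2 * (1 - 2 / Real.pi ^ 2 * (θ / 2) ^ 2)) := by gcongr
  refine (add_le_add_right this _).trans (le_of_eq ?_)
  ring

lemma exp_neg_taylor (x : ℝ) (hx : 0 ≤ x) : |Real.exp (-x) - (1 - x)| ≤ x ^ 2 / 2 := by
  have h1 := Real.add_one_le_exp (-x)
  rw [abs_of_nonneg (by linarith)]
  have h2 := Real.quadratic_le_exp_of_nonneg hx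
  rw [Real.exp_neg]
  have h3 : (Real.exp x)⁻¹ ≤ (1 + x + x ^ 2 / 2)⁻¹ := by gcongr
  have h4 : (1 + x + x ^ 2 / 2)⁻¹ ≤ 1 - x + x ^ 2 / 2 := by
    rw [inv_le_iff_one_le_mul₀ (by positivity)]
    nlinarith [sq_nonneg (x^2)]
  linarith

lemma char_taylor {p : ℕ → ℝ} {d B μ : ℝ} (hp : ∀ k, 0 ≤ p k) (h1 : HasSum p 1)
    (hd : 0 < d) (h2 : d ≤ p 2) (h3 : d ≤ p 3)
    (hm : HasSum (fun k : ℕ => p k * (k - μ)) 0)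
    {T : ℝ} (hT : HasSum (fun k : ℕ => p k * |k - μ| ^ 3) T) (hB : T ≤ B) :
    ∃ s, d / 2 ≤ s ∧ s ≤ 1 + B ∧ ∀ (θ : ℝ) (z : ℂ), |θ| ≤ Real.pi →
      HasSum (fun k : ℕ => (p k : ℂ) * Complex.exp (((k - μ) * θ : ℝ) * Complex.I)) z →
      ‖z - Real.exp (-(s / 2) * θ ^ 2)‖ ≤ (4 * B + (1 + B) ^ 2) * |θ| ^ 3 := by
  have hle : ∀ k : ℕ, p k * ((k:ℝ) - μ) ^ 2 ≤ p k + p k * |(k:ℝ) - μ| ^ 3 := by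
    intro k
    have : ((k:ℝ) - μ) ^ 2 ≤ 1 + |(k:ℝ) - μ| ^ 3 := by
      rw [← sq_abs]
      have h0 := abs_nonneg ((k:ℝ) - μ)
      rcases le_total |(k:ℝ) - μ| 1 with h | h
      · have : 0 ≤ |(k:ℝ) - μ| ^ 3 := by positivity
        nlinarith
      · have := pow_le_pow_right₀ h (show 2 ≤ 3 by norm_num)
        linarith
    nlinarith [mul_le_mul_of_nonneg_left this (hp k)]
  have hs : Summable (fun k : ℕ => p k * ((k:ℝ) - μ) ^ 2) :=
    Summable.of_nonneg_of_le (fun k => mul_nonneg (hp k) (sq_nonneg _)) hle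
      (h1.add hT).summable
  obtain ⟨s, hs⟩ := hs
  have hs1 : s ≤ 1 + B := (hasSum_le hle hs (h1.add hT)).trans (by linarith)
  have hs0 : d / 2 ≤ s := by
    have := sum_le_hasSum {2, 3} (fun k _ => mul_nonneg (hp k) (sq_nonneg _)) hs
    rw [Finset.sum_pair (by norm_num)] at this
    push_cast at this
    nlinarith [mul_le_mul_of_nonneg_right h2 (sq_nonneg (2 - μ)),
      mul_le_mul_of_nonneg_right h3 (sq_nonneg (3 - μ)), sq_nonneg (μ - 5/2)]
  refine ⟨s, hs0, hs1, fun θ z hθ hz => ?_⟩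
  have hT0 : 0 ≤ T := hT.nonneg fun k => mul_nonneg (hp k) (by positivity)
  have a1 : HasSum (fun k : ℕ => (p k : ℂ)) 1 := by
    simpa using Complex.hasSum_ofReal.2 h1
  have a2 : HasSum (fun k : ℕ => ((p k * (k - μ) : ℝ) : ℂ)) 0 := by
    simpa using Complex.hasSum_ofReal.2 hm
  have a3 : HasSum (fun k : ℕ => ((p k * (k - μ) ^ 2 : ℝ) : ℂ)) s := Complex.hasSum_ofReal.2 hs
  have a4 := ((hz.sub a1).sub (a2.mul_right (θ * Complex.I))).add (a3.mul_right ((θ:ℂ) ^ 2 / 2))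
  have b1 : ‖z - 1 - 0 * (θ * Complex.I) + s * ((θ:ℂ) ^ 2 / 2)‖ ≤ T * (4 * |θ| ^ 3) := by
    refine a4.norm_le_of_bounded (hT.mul_right (4 * |θ| ^ 3)) fun k => ?_
    have e : (p k : ℂ) * Complex.exp (((k - μ) * θ : ℝ) * Complex.I) - (p k : ℂ)
      - ((p k * (k - μ) : ℝ) : ℂ) * (θ * Complex.I) + ((p k * (k - μ) ^ 2 : ℝ) : ℂ) * ((θ:ℂ) ^ 2 / 2)
      = (p k : ℂ) * (Complex.exp (((k - μ) * θ : ℝ) * Complex.I) - 1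
        - ((k - μ) * θ : ℝ) * Complex.I + (((k - μ) * θ : ℝ) : ℂ) ^ 2 / 2) := by
      push_cast; ring
    rw [e, norm_mul, Complex.norm_real, Real.norm_of_nonneg (hp k), mul_assoc]
    refine mul_le_mul_of_nonneg_left ((taylor_exp _).trans (le_of_eq ?_)) (hp k)
    rw [abs_mul]; ring
  have b2 : ‖((Real.exp (-(s / 2) * θ ^ 2) - (1 - s / 2 * θ ^ 2) : ℝ) : ℂ)‖ ≤ (1 + B) ^ 2 * |θ| ^ 3 := by
    rw [Complex.norm_real, Real.norm_eq_abs]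
    have := exp_neg_taylor (s / 2 * θ ^ 2) (mul_nonneg (by linarith) (sq_nonneg _))
    rw [← neg_mul] at this
    refine this.trans ?_
    have t1 : s ^ 2 ≤ (1 + B) ^ 2 := by
      have : 0 ≤ s := by linarith
      gcongr
    have t2 : θ ^ 4 ≤ 8 * |θ| ^ 3 := by
      have : θ ^ 4 = |θ| * |θ| ^ 3 := by
        rw [← pow_succ']; exact (Even.pow_abs (by decide) θ).symm
      rw [this]
      have := Real.pi_le_four
      gcongr; linarith
    calc (s / 2 * θ ^ 2) ^ 2 / 2 = s ^ 2 * (θ ^ 4 / 8) := by ring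
      _ ≤ (1 + B) ^ 2 * |θ| ^ 3 := by gcongr; linarith
  calc ‖z - Real.exp (-(s / 2) * θ ^ 2)‖
      = ‖(z - 1 - 0 * (θ * Complex.I) + s * ((θ:ℂ) ^ 2 / 2))
        - ((Real.exp (-(s / 2) * θ ^ 2) - (1 - s / 2 * θ ^ 2) : ℝ) : ℂ)‖ := by
        congr 1; push_cast; ring
    _ ≤ T * (4 * |θ| ^ 3) + (1 + B) ^ 2 * |θ| ^ 3 := (norm_sub_le _ _).trans (add_le_add b1 b2)
    _ ≤ B * (4 * |θ| ^ 3) + (1 + B) ^ 2 * |θ| ^ 3 := by gcongr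
    _ = _ := by ring

lemma pow_sub_bound (x y : ℂ) (r : ℝ) (hx : ‖x‖ ≤ r) (hy : ‖y‖ ≤ r) (n : ℕ) :
    ‖x ^ (n + 1) - y ^ (n + 1)‖ ≤ (n + 1) * r ^ n * ‖x - y‖ := by
  have hr : 0 ≤ r := (norm_nonneg _).trans hx
  induction n with
  | zero => simp
  | succ n ih =>
    have : x ^ (n + 1 + 1) - y ^ (n + 1 + 1) =
      x ^ (n + 1) * (x - y) + (x ^ (n + 1) - y ^ (n + 1)) * y := by ring
    rw [this]
    have h1 : ‖x ^ (n + 1)‖ ≤ r ^ (n + 1) := by rw [norm_pow]; gcongr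
    calc _ ≤ ‖x ^ (n + 1)‖ * ‖x - y‖ + ‖x ^ (n + 1) - y ^ (n + 1)‖ * ‖y‖ := by
          rw [← norm_mul, ← norm_mul]; exact norm_add_le _ _
      _ ≤ r ^ (n + 1) * ‖x - y‖ + ((n + 1) * r ^ n * ‖x - y‖) * r := by gcongr
      _ = _ := by push_cast; ring

lemma gauss_interval (b : ℝ) (hb : 0 < b) :
    ∫ θ in (-Real.pi)..Real.pi, Real.exp (-b * θ ^ 2) ≤ √(Real.pi / b) := by
  rw [← integral_gaussian b, intervalIntegral.integral_of_le (by linarith [Real.pi_pos])]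
  exact MeasureTheory.setIntegral_le_integral (integrable_exp_neg_mul_sq hb)
    (Filter.Eventually.of_forall fun x => (Real.exp_pos _).le)

lemma gauss_lower (s : ℝ) (n : ℕ) (hs : 0 ≤ s) (hn : 1 ≤ n) :
    2 * Real.exp (-(s / 2)) / √n ≤
      ∫ θ in (-Real.pi)..Real.pi, Real.exp (-(s / 2) * θ ^ 2) ^ n := by
  have hn' : (1:ℝ) ≤ √n := by
    rw [Real.one_le_sqrt]; exact_mod_cast hn
  have hpos : 0 < √(n:ℝ) := by linarith
  have hle : 1 / √(n:ℝ) ≤ Real.pi := by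
    rw [div_le_iff₀ hpos]; nlinarith [Real.pi_gt_three]
  have h0 : 0 < 1 / √(n:ℝ) := by positivity
  have hc : Continuous fun θ : ℝ => Real.exp (-(s / 2) * θ ^ 2) ^ n := by fun_prop
  calc 2 * Real.exp (-(s / 2)) / √n = ∫ θ in (-(1 / √(n:ℝ)))..(1 / √(n:ℝ)), Real.exp (-(s / 2)) := by
        rw [intervalIntegral.integral_const, smul_eq_mul]; ring
    _ ≤ ∫ θ in (-(1 / √(n:ℝ)))..(1 / √(n:ℝ)), Real.exp (-(s / 2) * θ ^ 2) ^ n := by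
        refine intervalIntegral.integral_mono_on (by linarith) (by simp)
          (hc.intervalIntegrable _ _) fun θ hθ => ?_
        rw [← Real.exp_nat_mul]
        apply Real.exp_le_exp.2
        have : θ ^ 2 ≤ (1 / √(n:ℝ)) ^ 2 := sq_le_sq' hθ.1 hθ.2
        rw [div_pow, Real.sq_sqrt (by positivity), one_pow, le_div_iff₀ (by positivity)] at this
        nlinarith
    _ ≤ _ := by
        refine intervalIntegral.integral_mono_interval (by linarith) (by linarith) hle
          (Filter.Eventually.of_forall fun x => by positivity) (hc.intervalIntegrable _ _)

lemma cube_bound (c y : ℝ) (hc : 0 < c) (hy : 0 ≤ y) :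
    y ^ 3 * Real.exp (-c * y ^ 2) ≤ (1 + 8 / c ^ 2) * Real.exp (-(c / 2) * y ^ 2) := by
  have h1 := Real.quadratic_le_exp_of_nonneg (x := c / 2 * y ^ 2) (by positivity)
  have h2 : y ^ 3 ≤ 1 + y ^ 4 := by
    rcases le_total y 1 with h | h
    · have := pow_le_one₀ (n := 3) hy h
      have : 0 ≤ y ^ 4 := by positivity
      linarith
    · have := pow_le_pow_right₀ h (show 3 ≤ 4 by norm_num)
      linarith
  have h3 : y ^ 4 ≤ 8 / c ^ 2 * Real.exp (c / 2 * y ^ 2) := by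
    have : y ^ 4 = 8 / c ^ 2 * ((c / 2 * y ^ 2) ^ 2 / 2) := by field_simp; norm_num
    rw [this]
    have : 0 ≤ c / 2 * y ^ 2 := by positivity
    gcongr; linarith
  have h4 : 1 ≤ Real.exp (c / 2 * y ^ 2) := Real.one_le_exp (by positivity)
  calc y ^ 3 * Real.exp (-c * y ^ 2)
      ≤ ((1 + 8 / c ^ 2) * Real.exp (c / 2 * y ^ 2)) * Real.exp (-c * y ^ 2) := by
        gcongr; linarith
    _ = _ := by rw [mul_assoc, ← Real.exp_add]; congr 2; ring

lemma local_limit (c K S : ℝ) (hc : 0 < c) (hK : 0 ≤ K) :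
    ∃ k₁ k₂ : ℝ, 0 < k₁ ∧ 0 < k₂ ∧ ∃ N : ℕ, ∀ (ψ : ℝ → ℂ) (s : ℝ), Continuous ψ →
      (∀ θ, |θ| ≤ Real.pi → ‖ψ θ‖ ≤ Real.exp (-c * θ ^ 2)) → c ≤ s / 2 → s ≤ S →
      (∀ θ, |θ| ≤ Real.pi → ‖ψ θ - Real.exp (-(s / 2) * θ ^ 2)‖ ≤ K * |θ| ^ 3) →
      ∀ n : ℕ, 1 ≤ n →
        (∫ θ in (-Real.pi)..Real.pi, ψ θ ^ n).re ≤ k₂ / √n ∧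
        (N ≤ n → k₁ / √n ≤ (∫ θ in (-Real.pi)..Real.pi, ψ θ ^ n).re) := by
  set L : ℝ := Real.exp (c * Real.pi ^ 2) * K * (1 + 8 / c ^ 2) * √(Real.pi / (c / 2)) with hL
  have hL0 : 0 ≤ L := by positivity
  obtain ⟨N, hN⟩ := exists_nat_ge ((L / Real.exp (-(S / 2))) ^ 2)
  refine ⟨Real.exp (-(S / 2)), √(Real.pi / c), Real.exp_pos _, by positivity, N, ?_⟩
  intro ψ s hψ h1 hs0 hsS h2 n hn
  have hn0 : (0:ℝ) < n := by exact_mod_cast hn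
  have hsn : 0 < √(n:ℝ) := by positivity
  have hpi := Real.pi_pos
  have habs : ∀ θ ∈ Set.Icc (-Real.pi) Real.pi, |θ| ≤ Real.pi := fun θ h => abs_le.2 h
  have hab2 : ∀ θ ∈ Set.Ioc (-Real.pi) Real.pi, |θ| ≤ Real.pi := fun θ h => abs_le.2 ⟨h.1.le, h.2⟩
  constructor
  · refine (Complex.re_le_norm _).trans ?_
    have : ‖∫ θ in (-Real.pi)..Real.pi, ψ θ ^ n‖ ≤
        ∫ θ in (-Real.pi)..Real.pi, Real.exp (-(n * c) * θ ^ 2) := by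
      refine intervalIntegral.norm_integral_le_of_norm_le (by linarith)
        (Filter.Eventually.of_forall fun θ hθ => ?_)
        ((by fun_prop : Continuous fun θ : ℝ => Real.exp (-(n * c) * θ ^ 2)).intervalIntegrable _ _)
      rw [norm_pow]
      calc ‖ψ θ‖ ^ n ≤ Real.exp (-c * θ ^ 2) ^ n := by gcongr; exact h1 θ (hab2 θ hθ)
        _ = _ := by rw [← Real.exp_nat_mul]; congr 1; ring
    refine this.trans ((gauss_interval _ (by positivity)).trans (le_of_eq ?_))
    rw [← Real.sqrt_div (by positivity)]; congr 1; field_simp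
  · intro hNn
    set g : ℝ → ℝ := fun θ => Real.exp (-(s / 2) * θ ^ 2) with hg
    have hgc : Continuous g := by fun_prop
    have hlow := gauss_lower s n (by linarith) hn
    have hdiff : ‖∫ θ in (-Real.pi)..Real.pi, (ψ θ ^ n - ((g θ ^ n : ℝ) : ℂ))‖ ≤ L / n := by
      have : ‖∫ θ in (-Real.pi)..Real.pi, (ψ θ ^ n - ((g θ ^ n : ℝ) : ℂ))‖ ≤
          ∫ θ in (-Real.pi)..Real.pi, (Real.exp (c * Real.pi ^ 2) * K * (1 + 8 / c ^ 2) / √n) *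
            Real.exp (-(n * (c / 2)) * θ ^ 2) := by
        refine intervalIntegral.norm_integral_le_of_norm_le (by linarith)
          (Filter.Eventually.of_forall fun θ hθ => ?_)
          ((by fun_prop : Continuous fun θ : ℝ => (Real.exp (c * Real.pi ^ 2) * K * (1 + 8 / c ^ 2) / √n) *
            Real.exp (-(n * (c / 2)) * θ ^ 2)).intervalIntegrable _ _)
        obtain ⟨j, rfl⟩ : ∃ j, n = j + 1 := ⟨n - 1, by omega⟩
        have hθ' := hab2 θ hθ
        have hgb : ‖(g θ : ℂ)‖ ≤ Real.exp (-c * θ ^ 2) := by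
          rw [Complex.norm_real, Real.norm_of_nonneg (Real.exp_pos _).le]
          apply Real.exp_le_exp.2
          nlinarith [sq_nonneg θ]
        have := pow_sub_bound (ψ θ) (g θ) _ (h1 θ hθ') hgb j
        push_cast at this ⊢
        refine this.trans ?_
        have e1 : Real.exp (-c * θ ^ 2) ^ j ≤
            Real.exp (c * Real.pi ^ 2) * Real.exp (-c * (√(j + 1 : ℝ) * |θ|) ^ 2) := by
          rw [← Real.exp_nat_mul, ← Real.exp_add]
          apply Real.exp_le_exp.2
          rw [mul_pow, Real.sq_sqrt (by positivity), sq_abs]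
          have : θ ^ 2 ≤ Real.pi ^ 2 := sq_le_sq' (by linarith [hθ.1]) hθ.2
          nlinarith
        have e2 := cube_bound c (√(j + 1 : ℝ) * |θ|) hc (by positivity)
        have e3 : (√(j + 1 : ℝ)) ^ 2 = j + 1 := Real.sq_sqrt (by positivity)
        have e4 : 0 < √(j + 1 : ℝ) := by positivity
        calc ((j:ℝ) + 1) * Real.exp (-c * θ ^ 2) ^ j * ‖ψ θ - g θ‖
            ≤ ((j:ℝ) + 1) * (Real.exp (c * Real.pi ^ 2) * Real.exp (-c * (√(j + 1 : ℝ) * |θ|) ^ 2))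
              * (K * |θ| ^ 3) := by
              gcongr
              exact h2 θ hθ'
          _ = Real.exp (c * Real.pi ^ 2) * K / √(j + 1 : ℝ) *
              ((√(j + 1 : ℝ) * |θ|) ^ 3 * Real.exp (-c * (√(j + 1 : ℝ) * |θ|) ^ 2)) := by
              field_simp
              rw [e3]
          _ ≤ Real.exp (c * Real.pi ^ 2) * K / √(j + 1 : ℝ) *
              ((1 + 8 / c ^ 2) * Real.exp (-(c / 2) * (√(j + 1 : ℝ) * |θ|) ^ 2)) := by
              gcongr
          _ = _ := by
              rw [mul_pow, e3, sq_abs]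
              rw [show -(c / 2) * (((j:ℝ) + 1) * θ ^ 2) = -((j + 1) * (c / 2)) * θ ^ 2 by ring]
              ring
      refine this.trans ?_
      rw [intervalIntegral.integral_const_mul]
      have h5 := gauss_interval (n * (c / 2)) (by positivity)
      have h6 : √(Real.pi / (n * (c / 2))) = √(Real.pi / (c / 2)) / √n := by
        rw [← Real.sqrt_div (by positivity)]; congr 1; field_simp
      rw [h6] at h5
      calc _ ≤ (Real.exp (c * Real.pi ^ 2) * K * (1 + 8 / c ^ 2) / √n) *
            (√(Real.pi / (c / 2)) / √n) := by gcongr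
        _ = L / (√n * √n) := by rw [hL]; field_simp
        _ = L / n := by rw [Real.mul_self_sqrt hn0.le]
    rw [intervalIntegral.integral_sub ((by fun_prop : Continuous fun θ => ψ θ ^ n).intervalIntegrable _ _)
      ((by fun_prop : Continuous fun θ => ((g θ ^ n : ℝ) : ℂ)).intervalIntegrable _ _),
      intervalIntegral.integral_ofReal] at hdiff
    have h7 := (abs_le.1 ((Complex.abs_re_le_norm _).trans hdiff)).1
    rw [Complex.sub_re, Complex.ofReal_re] at h7
    have h8 : L / n ≤ Real.exp (-(S / 2)) / √n := by
      have : (L / Real.exp (-(S / 2))) ^ 2 ≤ (n:ℝ) := hN.trans (by exact_mod_cast hNn)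
      have := Real.le_sqrt_of_sq_le this
      rw [div_le_iff₀ (Real.exp_pos _)] at this
      rw [div_le_div_iff₀ hn0 hsn]
      nlinarith [Real.mul_self_sqrt hn0.le]
    have h9 : 2 * Real.exp (-(S / 2)) / √n ≤ 2 * Real.exp (-(s / 2)) / √n := by gcongr
    have h10 : 2 * Real.exp (-(S / 2)) / √n = Real.exp (-(S / 2)) / √n + Real.exp (-(S / 2)) / √n := by ring
    linarith

end TPois

namespace TPois

lemma q_lower (a : ℝ) (ha : 0 < a) : a ^ 2 / 2 ≤ q a := by
  have := Real.quadratic_le_exp_of_nonneg ha.le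
  unfold q; linarith

lemma a_range (ε C x a : ℝ) (ha : 0 < a) (h1 : 2 + ε ≤ x) (h2 : x ≤ C) (h : Qf a = x) :
    ε ≤ a ∧ a ≤ C := by
  have hq := q_lower a ha
  have hq0 : 0 < q a := lt_of_lt_of_le (by positivity) hq
  have hE : a * (Real.exp a - 1) = x * q a := by
    rw [← h, Qf]; rw [q] at hq0 ⊢; field_simp
  have hx : Real.exp a - 1 = q a + a := by unfold q; ring
  rw [hx] at hE
  constructor
  · by_contra hlt
    push Not at hlt
    nlinarith
  · by_contra hlt
    push Not at hlt
    nlinarith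

lemma hasSum_mean (a : ℝ) :
    HasSum (fun k : ℕ => wt k * a ^ k * k) (a * (Real.exp a - 1)) := by
  have h := NormedSpace.expSeries_div_hasSum_exp (𝔸 := ℝ) a
  rw [← Real.exp_eq_exp_ℝ] at h
  rw [← hasSum_nat_add_iff' 1] at h
  have h' := h.mul_left a
  rw [← hasSum_nat_add_iff' 2]
  refine Eq.mp ?_ h'
  congr 1
  · funext k
    symm
    have : ((k + 2).factorial : ℝ) = (k + 2) * (k + 1).factorial := by
      rw [show k + 2 = (k + 1) + 1 from rfl, Nat.factorial_succ]; push_cast; ring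
    simp only [wt, this]
    have : ((k + 1).factorial : ℝ) ≠ 0 := by positivity
    simp
    field_simp
    ring
  · simp [Finset.sum_range_succ, wt]

lemma third_moment (a μ D : ℝ) (ha : 0 < a) (hμ : 0 ≤ μ) (hD : 0 < D) :
    ∃ T, HasSum (fun k : ℕ => (wt k * a ^ k / D) * |(k:ℝ) - μ| ^ 3) T ∧
      T ≤ 6 * Real.exp μ / D * Real.exp (Real.exp 1 * a) := by
  have h := NormedSpace.expSeries_div_hasSum_exp (𝔸 := ℝ) (Real.exp 1 * a)
  rw [← Real.exp_eq_exp_ℝ] at h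
  have h' := h.mul_left (6 * Real.exp μ / D)
  have hle : ∀ k : ℕ, (wt k * a ^ k / D) * |(k:ℝ) - μ| ^ 3 ≤
      6 * Real.exp μ / D * ((Real.exp 1 * a) ^ k / k.factorial) := by
    intro k
    have h1 : wt k ≤ 1 / k.factorial := by
      unfold wt; split_ifs
      · exact le_rfl
      · positivity
    have h2 : |(k:ℝ) - μ| ^ 3 ≤ 6 * (Real.exp μ * Real.exp 1 ^ k) := by
      have h3 := Real.pow_div_factorial_le_exp |(k:ℝ) - μ| (abs_nonneg _) 3
      have h4 : Real.exp |(k:ℝ) - μ| ≤ Real.exp μ * Real.exp 1 ^ k := by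
        rw [← Real.exp_nat_mul, ← Real.exp_add]
        apply Real.exp_le_exp.2
        rw [abs_le]
        have : (0:ℝ) ≤ k := by positivity
        constructor <;> linarith
      norm_num [Nat.factorial] at h3
      linarith
    calc (wt k * a ^ k / D) * |(k:ℝ) - μ| ^ 3
        ≤ (1 / k.factorial * a ^ k / D) * (6 * (Real.exp μ * Real.exp 1 ^ k)) := by gcongr
      _ = _ := by rw [mul_pow]; ring
  have hs : Summable (fun k : ℕ => (wt k * a ^ k / D) * |(k:ℝ) - μ| ^ 3) :=
    Summable.of_nonneg_of_le (fun k => by have := wt_nonneg k; positivity) hle h'.summable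
  obtain ⟨T, hT⟩ := hs
  exact ⟨T, hT, hasSum_le hle hT h'⟩

lemma main_est (ε C : ℝ) (hε : 0 < ε) :
    ∃ k₁ k₂ : ℝ, 0 < k₁ ∧ 0 < k₂ ∧ ∃ N : ℕ, ∀ m n : ℕ, 0 < n →
      (2 + ε) * (n : ℝ) ≤ (m : ℝ) → (m : ℝ) ≤ C * (n : ℝ) →
        ∀ a : ℝ, 0 < a → Qf a = (m : ℝ) / (n : ℝ) →
        2 * Real.pi * (cc n m * a ^ m / q a ^ n) ≤ k₂ / √n ∧
        (N ≤ n → k₁ / √n ≤ 2 * Real.pi * (cc n m * a ^ m / q a ^ n)) := by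
  set d : ℝ := min (ε ^ 2 / 2) (ε ^ 3 / 6) / Real.exp C with hd
  have hd0 : 0 < d := by positivity
  set B : ℝ := 6 * Real.exp C / (ε ^ 2 / 2) * Real.exp (Real.exp 1 * C) with hB
  have hB0 : 0 < B := by positivity
  obtain ⟨k₁, k₂, hk₁, hk₂, N, H⟩ := local_limit (d / Real.pi ^ 2) (4 * B + (1 + B) ^ 2) (1 + B)
    (by positivity) (by positivity)
  refine ⟨k₁, k₂, hk₁, hk₂, N, ?_⟩
  intro m n hn h1 h2 a ha hQ
  have hn0 : (0:ℝ) < n := by exact_mod_cast hn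
  set μ : ℝ := (m:ℝ) / n with hμ
  have hμ1 : 2 + ε ≤ μ := by rw [hμ, le_div_iff₀ hn0]; exact h1
  have hμ2 : μ ≤ C := by rw [hμ, div_le_iff₀ hn0]; exact h2
  obtain ⟨haε, haC⟩ := a_range ε C μ a ha hμ1 hμ2 hQ
  have hqa := q_lower a ha
  set D := q a with hD
  have hD0 : 0 < D := lt_of_lt_of_le (by positivity) hqa
  have hDε : ε ^ 2 / 2 ≤ D := le_trans (by gcongr) hqa
  have hDC : D ≤ Real.exp C := by
    have : D ≤ Real.exp a := by rw [hD]; unfold q; linarith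
    exact this.trans (Real.exp_le_exp.2 haC)
  let p : ℕ → ℝ := fun k => wt k * a ^ k / D
  have hp : ∀ k, 0 ≤ p k := fun k => by have := wt_nonneg k; positivity
  have hs : HasSum p 1 := by
    have := (hasSum_wt_real a).div_const D
    rwa [← hD, div_self hD0.ne'] at this
  have hp2 : d ≤ p 2 := by
    have : d ≤ (ε ^ 2 / 2) / Real.exp C := by rw [hd]; gcongr; exact min_le_left _ _
    refine this.trans ?_
    have e : p 2 = (a ^ 2 / 2) / D := by simp [p, wt]; ring
    rw [e]; gcongr
  have hp3 : d ≤ p 3 := by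
    have : d ≤ (ε ^ 3 / 6) / Real.exp C := by rw [hd]; gcongr; exact min_le_right _ _
    refine this.trans ?_
    have e : p 3 = (a ^ 3 / 6) / D := by simp [p, wt, Nat.factorial]; ring
    rw [e]; gcongr
  have hm : HasSum (fun k : ℕ => p k * (k - μ)) 0 := by
    have e1 := ((hasSum_mean a).div_const D).sub (hs.mul_right μ)
    have e2 : a * (Real.exp a - 1) / D - 1 * μ = 0 := by
      rw [← hQ, Qf, hD, q]; ring
    rw [e2] at e1
    refine Eq.mp ?_ e1
    congr 1
    funext k
    simp only [p]; ring
  obtain ⟨T, hT, hTB⟩ := third_moment a μ D ha (by linarith) hD0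
  have hTB' : T ≤ B := by
    refine hTB.trans ?_
    rw [hB]; gcongr
  obtain ⟨s, hs0, hs1, hst⟩ := char_taylor hp hs hd0 hp2 hp3 hm hT hTB'
  let z : ℝ → ℂ := fun θ =>
    (Complex.exp (a * Complex.exp (θ * Complex.I)) - a * Complex.exp (θ * Complex.I) - 1) / D
  let ψ : ℝ → ℂ := fun θ => z θ * Complex.exp ((-(μ * θ) : ℝ) * Complex.I)
  have hz : ∀ θ : ℝ, HasSum (fun k : ℕ => (p k : ℂ) * Complex.exp (k * θ * Complex.I)) (z θ) := by
    intro θ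
    have := (hasSum_wt (a * Complex.exp (θ * Complex.I))).div_const (D : ℂ)
    refine Eq.mp ?_ this
    congr 1
    funext k
    simp only [p]
    rw [mul_pow, ← Complex.exp_nat_mul, ← mul_assoc (k:ℂ)]
    push_cast; ring
  have hψs : ∀ θ : ℝ, HasSum (fun k : ℕ => (p k : ℂ) * Complex.exp (((k - μ) * θ : ℝ) * Complex.I))
      (ψ θ) := by
    intro θ
    refine Eq.mp ?_ ((hz θ).mul_right (Complex.exp ((-(μ * θ) : ℝ) * Complex.I)))
    congr 1
    funext k
    rw [mul_assoc, ← Complex.exp_add]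
    congr 2
    push_cast; ring
  have hψc : Continuous ψ := by fun_prop
  have hψb : ∀ θ, |θ| ≤ Real.pi → ‖ψ θ‖ ≤ Real.exp (-(d / Real.pi ^ 2) * θ ^ 2) := by
    intro θ hθ
    simp only [ψ]
    rw [norm_mul, Complex.norm_exp_ofReal_mul_I, mul_one]
    exact char_bound hp hs hd0 hp2 hp3 θ hθ _ (hz θ)
  have hcs : d / Real.pi ^ 2 ≤ s / 2 := by
    have : d / Real.pi ^ 2 ≤ d / 4 := by
      gcongr; nlinarith [Real.pi_gt_three]
    linarith
  have hfin := H ψ s hψc hψb hcs hs1 (fun θ hθ => hst θ _ hθ (hψs θ)) n hn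
  have hint : ∫ θ in (-Real.pi)..Real.pi, ψ θ ^ n =
      ((2 * Real.pi * (cc n m * a ^ m / D ^ n) : ℝ) : ℂ) := by
    have e : ∀ θ : ℝ, ψ θ ^ n = ((1 / D ^ n : ℝ) : ℂ) * ((Complex.exp (a * Complex.exp (θ * Complex.I))
        - a * Complex.exp (θ * Complex.I) - 1) ^ n * Complex.exp (-(m * θ * Complex.I))) := by
      intro θ
      simp only [ψ, z]
      rw [mul_pow, div_pow, ← Complex.exp_nat_mul]
      have : (n : ℂ) * ((-(μ * θ) : ℝ) * Complex.I) = -(m * θ * Complex.I) := by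
        have : (m:ℂ) = n * μ := by
          have : (m:ℝ) = n * μ := by rw [hμ]; field_simp
          exact_mod_cast this
        rw [this]; push_cast; ring
      rw [this]; push_cast; ring
    simp_rw [e]
    rw [intervalIntegral.integral_const_mul, cc_integral]
    push_cast; ring
  rw [hint, Complex.ofReal_re] at hfin
  exact hfin

lemma M_pos (m n : ℕ) (hn : 0 < n) (h : 2 * n ≤ m) : 1 ≤ M m n := by
  obtain ⟨j, rfl⟩ : ∃ j, n = j + 1 := ⟨n - 1, by omega⟩
  let v : Fin (j + 1) → ℕ := Fin.cons (m - 2 * j) fun _ => 2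
  have hv : v ∈ (Finset.Nat.antidiagonalTuple (j + 1) m).filter (fun v => ∀ i, 2 ≤ v i) := by
    rw [Finset.mem_filter, Finset.Nat.mem_antidiagonalTuple]
    constructor
    · simp [v, Fin.sum_univ_succ]; omega
    · intro i
      refine Fin.cases ?_ (fun i => ?_) i
      · simp [v]; omega
      · simp [v]
  unfold M
  calc 1 ≤ Nat.multinomial Finset.univ v := Nat.multinomial_pos _ _
    _ ≤ _ := Finset.single_le_sum (f := fun v => Nat.multinomial Finset.univ v)
        (fun _ _ => Nat.zero_le _) hv

lemma fact_upper (m : ℕ) (hm : 0 < m) :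
    (m.factorial : ℝ) ≤ Real.exp 1 * √m * (m / Real.exp 1) ^ m := by
  obtain ⟨j, rfl⟩ : ∃ j, m = j + 1 := ⟨m - 1, by omega⟩
  have h := Stirling.stirlingSeq'_antitone (Nat.zero_le j)
  simp only [Function.comp, Nat.succ_eq_add_one, zero_add] at h
  rw [Stirling.stirlingSeq_one, Stirling.stirlingSeq, div_le_iff₀ (by positivity)] at h
  refine h.trans (le_of_eq ?_)
  rw [Real.sqrt_mul (by norm_num)]
  field_simp

lemma fact_lower (m : ℕ) : √m * (m / Real.exp 1) ^ m ≤ (m.factorial : ℝ) := by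
  refine le_trans ?_ (Stirling.le_factorial_stirling m)
  have : (m:ℝ) ≤ 2 * Real.pi * m := by
    have : (0:ℝ) ≤ m := by positivity
    nlinarith [Real.pi_gt_three]
  gcongr

end TPois

open TPois in
theorem stmt2 (ε C : ℝ) (hε : 0 < ε) (hC : 2 + ε ≤ C) :
    ∃ c₁ c₂ : ℝ, 0 < c₁ ∧ c₁ ≤ c₂ ∧
      ∀ m n : ℕ, 0 < m → 0 < n → (2 + ε) * (n : ℝ) ≤ (m : ℝ) → (m : ℝ) ≤ C * (n : ℝ) →
        ∀ a : ℝ, 0 < a → Qf a = (m : ℝ) / (n : ℝ) →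
          c₁ * ((m : ℝ) / (a * Real.exp 1)) ^ m * q a ^ n ≤ (M m n : ℝ) ∧
          (M m n : ℝ) ≤ c₂ * ((m : ℝ) / (a * Real.exp 1)) ^ m * q a ^ n := by
  obtain ⟨k₁, k₂, hk₁, hk₂, N, H⟩ := main_est ε C hε
  have hC0 : 0 < C := by linarith
  set R : ℝ := max 1 (C * N / ε) with hR
  have hR1 : 1 ≤ R := le_max_left _ _
  set J : ℕ := ⌈C * N⌉₊ with hJ
  set W : ℝ := R ^ J * Real.exp C ^ N with hW
  have hW0 : 0 < W := by positivity
  have hpi := Real.pi_pos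
  set c₁ : ℝ := min (k₁ / (2 * Real.pi)) (1 / W) with hc₁
  have hc₁0 : 0 < c₁ := by positivity
  refine ⟨c₁, max c₁ (Real.exp 1 * √C * (k₂ / (2 * Real.pi))), hc₁0, le_max_left _ _, ?_⟩
  intro m n hm hn h1 h2 a ha hQ
  have hn0 : (0:ℝ) < n := by exact_mod_cast hn
  have hm0 : (0:ℝ) < m := by exact_mod_cast hm
  have hsn : 0 < √(n:ℝ) := by positivity
  obtain ⟨haε, haC⟩ := a_range ε C _ a ha (by rw [le_div_iff₀ hn0]; exact h1)
    (by rw [div_le_iff₀ hn0]; exact h2) hQ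
  have hq0 : 0 < q a := lt_of_lt_of_le (by positivity) (q_lower a ha)
  obtain ⟨hup, hlo⟩ := H m n hn h1 h2 a ha hQ
  set P : ℝ := cc n m * a ^ m / q a ^ n with hP
  have hcc : cc n m = P * q a ^ n / a ^ m := by rw [hP]; field_simp
  set X : ℝ := ((m : ℝ) / (a * Real.exp 1)) ^ m * q a ^ n with hX
  have hX0 : 0 < X := by positivity
  have hXe : X = (m / Real.exp 1) ^ m * (q a ^ n / a ^ m) := by
    rw [hX, div_pow, div_pow, mul_pow]; field_simp
  have hMe : (M m n : ℝ) = m.factorial * (P * (q a ^ n / a ^ m)) := by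
    rw [M_eq, hcc]; ring
  have hG : 0 < q a ^ n / a ^ m := by positivity
  have hP0 : 0 ≤ P := by
    have : 0 ≤ cc n m := Finset.sum_nonneg fun v _ => Finset.prod_nonneg fun i _ => wt_nonneg _
    positivity
  rw [mul_assoc, mul_assoc, ← hX]
  constructor
  · by_cases hN : N ≤ n
    · have hl := hlo hN
      have hPl : k₁ / (2 * Real.pi) / √n ≤ P := by
        rw [div_right_comm, div_le_iff₀ (by positivity)]; linarith
      have hsm : √(n:ℝ) ≤ √m := by
        apply Real.sqrt_le_sqrt; nlinarith
      rw [hMe]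
      calc c₁ * X ≤ k₁ / (2 * Real.pi) * X := by gcongr; exact min_le_left _ _
        _ = √n * (m / Real.exp 1) ^ m * (k₁ / (2 * Real.pi) / √n * (q a ^ n / a ^ m)) := by
            rw [hXe]; field_simp
        _ ≤ √m * (m / Real.exp 1) ^ m * (P * (q a ^ n / a ^ m)) := by gcongr
        _ ≤ _ := by gcongr; exact fact_lower m
    · push Not at hN
      have hnN : (n:ℝ) ≤ N := by exact_mod_cast hN.le
      have hM1 : (1:ℝ) ≤ M m n := by
        have : 2 * n ≤ m := by
          have : (2 * n : ℝ) ≤ m := by nlinarith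
          exact_mod_cast this
        exact_mod_cast M_pos m n hn this
      refine le_trans ?_ hM1
      have hmCN : (m:ℝ) ≤ C * N := h2.trans (by gcongr)
      have hXW : X ≤ W := by
        have x1 : (m : ℝ) / (a * Real.exp 1) ≤ R := by
          refine le_trans ?_ (le_max_right _ _)
          have : ε ≤ a * Real.exp 1 := by
            have : 1 ≤ Real.exp 1 := Real.one_le_exp (by norm_num)
            nlinarith
          gcongr
        have x2 : q a ≤ Real.exp C := by
          have : q a ≤ Real.exp a := by unfold q; linarith
          exact this.trans (Real.exp_le_exp.2 haC)
        have x3 : m ≤ J := by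
          have : (m:ℝ) ≤ J := hmCN.trans (Nat.le_ceil _)
          exact_mod_cast this
        rw [hX, hW]
        have x4 : 1 ≤ Real.exp C := Real.one_le_exp hC0.le
        gcongr ?_ * ?_
        · calc _ ≤ R ^ m := by gcongr
            _ ≤ R ^ J := pow_le_pow_right₀ hR1 x3
        · calc _ ≤ Real.exp C ^ n := by gcongr
            _ ≤ _ := pow_le_pow_right₀ x4 hN.le
      calc c₁ * X ≤ 1 / W * W := by gcongr; exact min_le_right _ _
        _ = 1 := by field_simp
  · have hPu : P ≤ k₂ / (2 * Real.pi) / √n := by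
      rw [div_right_comm, le_div_iff₀ (by positivity)]; linarith
    have hsm : √(m:ℝ) ≤ √C * √n := by
      rw [← Real.sqrt_mul hC0.le]; exact Real.sqrt_le_sqrt h2
    rw [hMe]
    calc _ ≤ (Real.exp 1 * √m * (m / Real.exp 1) ^ m) * (P * (q a ^ n / a ^ m)) := by
          gcongr; exact fact_upper m hm
      _ ≤ (Real.exp 1 * (√C * √n) * (m / Real.exp 1) ^ m) *
          (k₂ / (2 * Real.pi) / √n * (q a ^ n / a ^ m)) := by gcongr
      _ = Real.exp 1 * √C * (k₂ / (2 * Real.pi)) * X := by rw [hXe]; field_simp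
      _ ≤ _ := by gcongr; exact le_max_right _ _
end

section
/- For every real s > 0 and every a ∈ [0,1]: a·(exp(as)−1)/(exp(s)−1) ≤ (exp(as)−as−1)/(exp(s)−s−1) ≤ (exp(as)−1)/(exp(s)−1) ≤ exp(as−s). -/
theorem aux_sq (x : ℝ) (hx : 0 < x) : x^2 * Real.exp x ≤ (Real.exp x - 1)^2 := by
  have h1 : x / 2 ≤ Real.sinh (x/2) := Real.self_le_sinh_iff.2 (by positivity)
  rw [Real.sinh_eq, Real.exp_neg] at h1
  have hu : Real.exp x = Real.exp (x/2) * Real.exp (x/2) := by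
    rw [← Real.exp_add]; ring_nf
  rw [hu]
  have hp := Real.exp_pos (x/2)
  set u := Real.exp (x/2)
  have h2 : x * u ≤ u * u - 1 := by
    have h3 : x ≤ u - u⁻¹ := by linarith
    have h4 := mul_le_mul_of_nonneg_right h3 hp.le
    rw [sub_mul, inv_mul_cancel₀ hp.ne'] at h4
    exact h4
  have h5 : 0 ≤ x * u := by positivity
  have h6 := pow_le_pow_left₀ h5 h2 2
  nlinarith [h6]

theorem aux_anti : AntitoneOn (fun x : ℝ => x⁻¹ - (Real.exp x - 1)⁻¹) (Set.Ioi 0) := by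
  have hd : ∀ x : ℝ, 0 < x → HasDerivAt (fun x : ℝ => x⁻¹ - (Real.exp x - 1)⁻¹)
      (-(x^2)⁻¹ - (-Real.exp x / (Real.exp x - 1)^2)) x := by
    intro x hx
    have he : 0 < Real.exp x - 1 := by linarith [Real.add_one_lt_exp hx.ne']
    exact (hasDerivAt_inv hx.ne').sub (((Real.hasDerivAt_exp x).sub_const 1).inv he.ne')
  apply antitoneOn_of_deriv_nonpos (convex_Ioi 0)
  · intro x hx
    exact (hd x hx).continuousAt.continuousWithinAt
  · intro x hx
    rw [interior_Ioi] at hx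
    exact (hd x hx).differentiableAt.differentiableWithinAt
  · intro x hx
    rw [interior_Ioi] at hx
    have hx : 0 < x := hx
    rw [(hd x hx).deriv]
    have he : 0 < Real.exp x - 1 := by linarith [Real.add_one_lt_exp hx.ne']
    have : Real.exp x / (Real.exp x - 1)^2 ≤ 1 / x^2 := by
      rw [div_le_div_iff₀ (by positivity) (by positivity)]
      linarith [aux_sq x hx]
    rw [neg_div, ← one_div]
    linarith

theorem stmt4 (s : ℝ) (hs : 0 < s) (a : ℝ) (ha : a ∈ Set.Icc (0:ℝ) 1) :
    a * (Real.exp (a*s) - 1) / (Real.exp s - 1)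
        ≤ (Real.exp (a*s) - a*s - 1) / (Real.exp s - s - 1) ∧
    (Real.exp (a*s) - a*s - 1) / (Real.exp s - s - 1)
        ≤ (Real.exp (a*s) - 1) / (Real.exp s - 1) ∧
    (Real.exp (a*s) - 1) / (Real.exp s - 1) ≤ Real.exp (a*s - s) := by
  obtain ⟨h0, h1⟩ := ha
  have hB : 0 < Real.exp s - s - 1 := by linarith [Real.add_one_lt_exp hs.ne']
  have hA : 0 < Real.exp s - 1 := by linarith
  refine ⟨?_, ?_, ?_⟩
  · rcases h0.eq_or_lt with h | h
    · simp [← h]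
    have ht : 0 < a * s := by positivity
    have hT : 0 < Real.exp (a*s) - 1 := by linarith [Real.add_one_lt_exp ht.ne']
    have hle : a * s ≤ s := by nlinarith
    have hm := aux_anti (Set.mem_Ioi.2 ht) (Set.mem_Ioi.2 hs) hle
    simp only at hm
    rw [inv_sub_inv hs.ne' hA.ne', inv_sub_inv ht.ne' hT.ne',
      div_le_div_iff₀ (by positivity) (by positivity)] at hm
    rw [div_le_div_iff₀ hA hB]
    refine le_of_mul_le_mul_right ?_ hs
    linarith
  · rw [div_le_div_iff₀ hB hA]
    have hc := convexOn_exp.2 (Set.mem_univ s) (Set.mem_univ (0:ℝ)) h0 (sub_nonneg.2 h1)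
      (by ring)
    simp only [smul_eq_mul, mul_zero, add_zero, Real.exp_zero] at hc
    nlinarith [mul_le_mul_of_nonneg_left hc hs.le]
  · rw [div_le_iff₀ hA, mul_sub, ← Real.exp_add]
    have : Real.exp (a*s - s) ≤ 1 := Real.exp_le_one_iff.2 (by nlinarith)
    simp only [sub_add_cancel]
    linarith
end

section
/- For every real s ≥ 4 and every a ∈ [0,1/2]: a·(exp(as)−1)/(exp(s)−1) ≤ (7/10)·(exp(as)−as−1)/(exp(s)−s−1). -/
theorem stmt5 (s : ℝ) (hs : 4 ≤ s) (a : ℝ) (ha : a ∈ Set.Icc (0:ℝ) (1/2)) :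
    a * (Real.exp (a*s) - 1) / (Real.exp s - 1)
      ≤ (7/10) * ((Real.exp (a*s) - a*s - 1) / (Real.exp s - s - 1)) := by
  obtain ⟨ha0, ha1⟩ := ha
  have hx0 : 0 ≤ a * s := by positivity
  have hD : 0 < Real.exp s - s - 1 := by
    have := Real.add_one_lt_exp (x := s) (by linarith)
    linarith
  have hC : 0 < Real.exp s - 1 := by linarith
  have hB : 0 ≤ Real.exp (a*s) - a*s - 1 := by
    have := Real.add_one_le_exp (a*s)
    linarith
  have hA : 0 ≤ Real.exp (a*s) - 1 := by linarith
  rw [← mul_div_assoc, div_le_div_iff₀ hC hD]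
  rcases le_total (a*s) (43/20) with hx | hx
  · have h1 : (a*s) * (Real.exp (a*s) - 1) ≤ (151/50) * (Real.exp (a*s) - a*s - 1) := by
      generalize a * s = x at *
      have hT := Real.sum_le_exp_of_nonneg hx0 7
      simp only [Finset.sum_range_succ, Finset.sum_range_zero, Nat.factorial] at hT
      norm_num at hT
      have h2 : x^2 ≤ (43/20)^2 := by gcongr
      have h3 : x^3 ≤ (43/20)^3 := by gcongr
      have h4 : x^4 ≤ (43/20)^4 := by gcongr
      have h5 : x^5 ≤ (43/20)^5 := by gcongr
      have hm := mul_le_mul_of_nonneg_left hT (show (0:ℝ) ≤ 151/50 - x by linarith)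
      have hp : 0 ≤ x^2 * ((151/100-1) + x*(151/300-1/2) + x^2*(151/1200-1/6)
          + x^3*(151/6000-1/24) + x^4*(151/36000-1/120) - x^5/720) := by
        apply mul_nonneg (by positivity)
        norm_num at h2 h3 h4 h5 ⊢
        linarith
      nlinarith [hm, hp]
    have h2 : (151/50) * (Real.exp s - s - 1) ≤ (7/10) * s * (Real.exp s - 1) := by
      rcases le_total (151/35) s with h | h
      · nlinarith
      · have e4 : Real.exp 4 ≤ 54.6 := by
          have h1 := Real.exp_one_lt_d9
          have : Real.exp 4 = Real.exp 1 ^ 4 := by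
            rw [← Real.exp_nat_mul]; norm_num
          rw [this]
          calc Real.exp 1 ^ 4 ≤ 2.7182818286 ^ 4 := by gcongr
            _ ≤ 54.6 := by norm_num
        have ht := Real.add_one_le_exp (4 - s)
        have hmul : Real.exp s * Real.exp (4 - s) = Real.exp 4 := by
          rw [← Real.exp_add]; ring_nf
        have hE := Real.exp_pos s
        have k1 : Real.exp s * (5 - s) ≤ 54.6 := by
          calc Real.exp s * (5 - s) ≤ Real.exp s * Real.exp (4 - s) := by
                gcongr; linarith
            _ ≤ 54.6 := by rw [hmul]; exact e4
        have k2 : 0 ≤ Real.exp s * (s - 4) := mul_nonneg hE.le (by linarith)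
        norm_num at k1
        nlinarith
    have h3 := mul_le_mul_of_nonneg_right h1 hD.le
    have h4 := mul_le_mul_of_nonneg_left h2 hB
    have hs0 : 0 < s := by linarith
    refine le_of_mul_le_mul_left ?_ hs0
    nlinarith
  · have h1 : Real.exp (a*s) - 1 ≤ 1.4 * (Real.exp (a*s) - a*s - 1) := by
      generalize a * s = x at *
      have hT := Real.sum_le_exp_of_nonneg (show (0:ℝ) ≤ 43/20 by norm_num) 9
      simp only [Finset.sum_range_succ, Finset.sum_range_zero, Nat.factorial] at hT
      norm_num at hT
      have ht := Real.add_one_le_exp (x - 43/20)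
      have hm : Real.exp (43/20) * Real.exp (x - 43/20) = Real.exp x := by
        rw [← Real.exp_add]; ring_nf
      have h8 : 8.525 ≤ Real.exp (43/20) := by norm_num; linarith
      norm_num at h8 ⊢
      nlinarith
    have h2 : a * (Real.exp (a*s) - 1) ≤ (7/10) * (Real.exp (a*s) - a*s - 1) := by
      norm_num at h1
      nlinarith
    calc _ ≤ (7/10) * (Real.exp (a*s) - a*s - 1) * (Real.exp s - s - 1) := by gcongr
      _ ≤ _ := by gcongr; linarith
end

section
/- Let s ≥ 8 and set A(y) = (7/10)·Q·y. Then: (a) the function y ↦ OPT(1, A(y), A(y), 1, y, y, s) is strictly decreasing on 0 ≤ y ≤ 1/(2Q), and its value at y = 0 is 3; (b) for every fixed y with 0 ≤ y ≤ 1/(2Q), the function z ↦ OPT(1, A(y+z), A(y−z), 1, y+z, y−z, s) is decreasing on 0 ≤ z ≤ y. -/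
/-- `OPT(x₀,x₁,x₂,y₀,y₁,y₂,s) = OPT1 · OPT2 · OPT3` with `Q = Q(s)`. -/
noncomputable def OPT (x₀ x₁ x₂ y₀ y₁ y₂ s : ℝ) : ℝ :=
  ((q (s*x₀) + q (s*x₁) + q (s*x₂)) / q s) *
  (1 / (x₀*y₀ + x₁*y₁ + x₂*y₂)) ^ (Qf s) *
  ((y₀+y₁+y₂) ^ (Qf s) +
    2 * (y₀^2 + y₁^2 + y₂^2 - y₀*y₁ - y₀*y₂ - y₁*y₂) ^ (Qf s / 2))

/-- If the logarithmic derivatives of three positive functions sum to something negative, the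
product is strictly decreasing. -/
theorem strictAnti_prod (M k1 k2 k3 : ℝ) (F1 F2 F3 F1' F2' F3' : ℝ → ℝ)
    (h1 : ∀ x ∈ Set.Icc 0 M, HasDerivAt F1 (F1' x) x)
    (h2 : ∀ x ∈ Set.Icc 0 M, HasDerivAt F2 (F2' x) x)
    (h3 : ∀ x ∈ Set.Icc 0 M, HasDerivAt F3 (F3' x) x)
    (p1 : ∀ x ∈ Set.Icc 0 M, 0 < F1 x)
    (p2 : ∀ x ∈ Set.Icc 0 M, 0 < F2 x)
    (p3 : ∀ x ∈ Set.Icc 0 M, 0 < F3 x)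
    (b1 : ∀ x ∈ Set.Icc 0 M, F1' x ≤ k1 * x * F1 x)
    (b2 : ∀ x ∈ Set.Icc 0 M, F2' x ≤ k2 * x * F2 x)
    (b3 : ∀ x ∈ Set.Icc 0 M, F3' x ≤ k3 * x * F3 x)
    (hk : k1 + k2 + k3 < 0) :
    StrictAntiOn (fun x => F1 x * F2 x * F3 x) (Set.Icc 0 M) := by
  have hd : ∀ x ∈ Set.Icc 0 M, HasDerivAt (fun x => F1 x * F2 x * F3 x)
      ((F1' x * F2 x + F1 x * F2' x) * F3 x + F1 x * F2 x * F3' x) x := fun x hx =>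
    ((h1 x hx).mul (h2 x hx)).mul (h3 x hx)
  apply strictAntiOn_of_deriv_neg (convex_Icc 0 M)
  · exact fun x hx => (hd x hx).continuousAt.continuousWithinAt
  · intro x hx
    rw [interior_Icc] at hx
    have hx' : x ∈ Set.Icc 0 M := ⟨hx.1.le, hx.2.le⟩
    rw [(hd x hx').deriv]
    have q1 := p1 x hx'
    have q2 := p2 x hx'
    have q3 := p3 x hx'
    have e1 := mul_le_mul_of_nonneg_right (b1 x hx') (mul_pos q2 q3).le
    have e2 := mul_le_mul_of_nonneg_right (b2 x hx') (mul_pos q1 q3).le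
    have e3 := mul_le_mul_of_nonneg_right (b3 x hx') (mul_pos q1 q2).le
    have e4 : (k1 + k2 + k3) * (x * (F1 x * F2 x * F3 x)) < 0 :=
      mul_neg_of_neg_of_pos hk (mul_pos hx.1 (by positivity))
    nlinarith

theorem exp_big (s : ℝ) (hs : 8 ≤ s) : 100 * (s + 1) ≤ Real.exp s := by
  have h1 := Real.exp_one_gt_d9
  have h8 : Real.exp 8 = Real.exp 1 ^ 8 := by rw [← Real.exp_nat_mul]; norm_num
  have h2 : (2.7:ℝ) ^ 8 ≤ Real.exp 1 ^ 8 := by gcongr; linarith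
  have h3 : Real.exp s = Real.exp 8 * Real.exp (s - 8) := by rw [← Real.exp_add]; ring_nf
  have h4 := Real.add_one_le_exp (s - 8)
  rw [h3, h8]
  have h5 : (1000:ℝ) ≤ Real.exp 1 ^ 8 := le_trans (by norm_num) h2
  nlinarith

theorem q_big (s : ℝ) (hs : 8 ≤ s) : 99 / 100 * Real.exp s ≤ q s := by
  have := exp_big s hs
  unfold q; linarith

theorem q_pos' (s : ℝ) (hs : 8 ≤ s) : 0 < q s :=
  lt_of_lt_of_le (by positivity) (q_big s hs)

theorem q_nonneg' (x : ℝ) : 0 ≤ q x := by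
  have := Real.add_one_le_exp x
  unfold q; linarith

theorem bound1 (s : ℝ) (hs : 8 ≤ s) : 20 * (s * Real.exp (7 / 20 * s)) ≤ q s := by
  refine le_trans ?_ (q_big s hs)
  have h1 := Real.exp_one_gt_d9
  have h3 : Real.exp s = Real.exp (7 / 20 * s) * (Real.exp 1 ^ 5 * Real.exp (1/5) *
      Real.exp (13/20 * (s - 8))) := by
    rw [← Real.exp_nat_mul, ← Real.exp_add, ← Real.exp_add, ← Real.exp_add]; congr 1; push_cast; ring
  have h2 : (2.718:ℝ) ^ 5 ≤ Real.exp 1 ^ 5 := by gcongr; linarith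
  have h4 := Real.add_one_le_exp (1/5 : ℝ)
  have h5 := Real.add_one_le_exp (13/20 * (s - 8))
  have h6 : (2.718:ℝ)^5 * (1/5+1) * (13/20 * (s-8) + 1) ≤ Real.exp 1 ^ 5 * Real.exp (1/5) *
      Real.exp (13/20 * (s - 8)) := by
    gcongr
  have h7 : 20 * s ≤ 99/100 * ((2.718:ℝ)^5 * (1/5+1) * (13/20 * (s-8) + 1)) := by
    norm_num; linarith
  rw [h3]
  have h8 := Real.exp_pos (7/20 * s)
  nlinarith

theorem bound2 (s : ℝ) (hs : 8 ≤ s) :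
    14 * (s * (Real.exp (7 / 20 * s) * Real.exp (7 / 20 * s))) ≤ 15 * q s := by
  have hq := q_big s hs
  have h1 := Real.exp_one_gt_d9
  have h3 : Real.exp s = Real.exp (7 / 20 * s) * Real.exp (7 / 20 * s) *
      (Real.exp 1 ^ 2 * Real.exp (2/5) * Real.exp (3/10 * (s - 8))) := by
    rw [← Real.exp_nat_mul, ← Real.exp_add, ← Real.exp_add, ← Real.exp_add, ← Real.exp_add]
    congr 1; push_cast; ring
  have h2 : (2.7:ℝ) ^ 2 ≤ Real.exp 1 ^ 2 := by gcongr; linarith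
  have h4 := Real.add_one_le_exp (2/5 : ℝ)
  have h5 := Real.add_one_le_exp (3/10 * (s - 8))
  have h6 : (2.7:ℝ)^2 * (2/5+1) * (3/10 * (s-8) + 1) ≤ Real.exp 1 ^ 2 * Real.exp (2/5) *
      Real.exp (3/10 * (s - 8)) := by
    gcongr
  have h7 : 14 * s ≤ 15 * (99/100) * ((2.7:ℝ)^2 * (2/5+1) * (3/10 * (s-8) + 1)) := by
    norm_num; linarith
  have h8 : 0 < Real.exp (7/20 * s) * Real.exp (7/20 * s) := by positivity
  rw [h3] at hq
  nlinarith

theorem Qf_ge (s : ℝ) (hs : 8 ≤ s) : s ≤ Qf s := by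
  have h := q_pos' s hs
  unfold q at h
  unfold Qf
  rw [le_div_iff₀ h]
  nlinarith

theorem exp_rat (u : ℝ) (hu : 0 ≤ u) :
    Real.exp u * (1 - 2/5 * u) ≤ 1 + 4/5 * u := by
  have hd : ∀ x : ℝ, HasDerivAt (fun u => Real.exp u * (1 - 2/5 * u) - 4/5 * u)
      (Real.exp x * (1 - 2/5 * x) + Real.exp x * (-(2/5)) - 4/5) x := by
    intro x
    have h1 : HasDerivAt (fun u : ℝ => 1 - 2/5 * u) (-(2/5)) x := by
      simpa using ((hasDerivAt_id x).const_mul (2/5 : ℝ)).const_sub 1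
    have h2 : HasDerivAt (fun u : ℝ => 4/5 * u) (4/5) x := by
      simpa using ((hasDerivAt_id x).const_mul (4/5 : ℝ))
    exact ((Real.hasDerivAt_exp x).mul h1).sub h2
  have ha : Antitone (fun u => Real.exp u * (1 - 2/5 * u) - 4/5 * u) := by
    apply antitone_of_deriv_nonpos (fun x => (hd x).differentiableAt)
    intro x
    rw [(hd x).deriv]
    have h1 := Real.add_one_le_exp (1/2 - x)
    have h2 : Real.exp x * Real.exp (1/2 - x) = Real.exp (1/2) := by
      rw [← Real.exp_add]; ring_nf
    have h3 : Real.exp (1/2) ≤ 2 := by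
      have h4 : Real.exp (1/2) * Real.exp (1/2) = Real.exp 1 := by
        rw [← Real.exp_add]; norm_num
      have := Real.exp_one_lt_d9
      nlinarith [Real.exp_pos (1/2)]
    have := mul_le_mul_of_nonneg_left h1 (Real.exp_pos x).le
    nlinarith
  have := ha hu
  simp at this
  linarith

/-- Convexity bound for the exponential. -/
theorem exp_chord (V c : ℝ) (hc : 0 ≤ c) (hc1 : c ≤ 1) :
    Real.exp (c * V) - 1 ≤ c * (Real.exp V - 1) := by
  have := convexOn_exp.2 (Set.mem_univ (0:ℝ)) (Set.mem_univ V) (sub_nonneg.2 hc1) hc (by ring)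
  simp at this
  linarith

theorem sinh_chord (V c : ℝ) (hV : 0 ≤ V) (hc : 0 ≤ c) (hc1 : c ≤ 1) :
    Real.exp (c * V) - Real.exp (-(c * V)) ≤ c * (Real.exp V - Real.exp (-V)) := by
  have hd : ∀ x : ℝ, HasDerivAt (fun x => c * (Real.exp x - Real.exp (-x)) -
      (Real.exp (c * x) - Real.exp (-(c * x))))
      (c * (Real.exp x - Real.exp (-x) * (-1)) -
        (Real.exp (c * x) * c - Real.exp (-(c*x)) * (-c))) x := by
    intro x
    have h1 : HasDerivAt (fun u : ℝ => c * u) c x := by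
      simpa using ((hasDerivAt_id x).const_mul c)
    exact (((Real.hasDerivAt_exp x).sub (hasDerivAt_neg x).exp).const_mul c).sub
      (h1.exp.sub h1.neg.exp)
  have hm : MonotoneOn (fun x => c * (Real.exp x - Real.exp (-x)) -
      (Real.exp (c * x) - Real.exp (-(c * x)))) (Set.Ici 0) := by
    apply monotoneOn_of_deriv_nonneg (convex_Ici 0)
    · exact fun x _ => (hd x).continuousAt.continuousWithinAt
    · exact fun x _ => (hd x).differentiableAt.differentiableWithinAt
    · intro x hx
      rw [interior_Ici] at hx
      have hx0 : 0 < x := hx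
      rw [(hd x).deriv]
      have h2 : Real.cosh (c * x) ≤ Real.cosh x := by
        rw [Real.cosh_le_cosh, abs_of_nonneg (by positivity), abs_of_nonneg hx0.le]
        nlinarith
      rw [Real.cosh_eq, Real.cosh_eq] at h2
      nlinarith
  have := hm (Set.mem_Ici.2 le_rfl) (Set.mem_Ici.2 hV) hV
  simp at this
  linarith

theorem q_deriv (x : ℝ) : HasDerivAt q (Real.exp x - 1) x := by
  have h := ((Real.hasDerivAt_exp x).sub (hasDerivAt_id x)).sub_const 1
  have e : q = fun x : ℝ => ((Real.exp - id : ℝ → ℝ) x - 1) := by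
    funext t; simp [q]
  rw [e]; exact h

theorem inv_rpow_deriv (N : ℝ → ℝ) (N' x Q : ℝ) (hN : HasDerivAt N N' x) (hp : 0 < N x) :
    HasDerivAt (fun x => (1 / N x) ^ Q) (-(Q * N' / N x) * (1 / N x) ^ Q) x := by
  have hp' : 0 < 1 / N x := by positivity
  have h1 : HasDerivAt (fun x => 1 / N x) (-N' / N x ^ 2) x := by
    have h := hN.inv hp.ne'
    have e : (fun x => 1 / N x) = N⁻¹ := by
      funext t; simp
    rw [e]; exact h
  have := h1.rpow_const (p := Q) (Or.inl hp'.ne')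
  convert this using 1
  rw [Real.rpow_sub_one hp'.ne']
  field_simp

/-- Part (a), monotonicity. -/
theorem partA (s : ℝ) (hs : 8 ≤ s) : StrictAntiOn
        (fun y => OPT 1 (7/10 * Qf s * y) (7/10 * Qf s * y) 1 y y s)
        (Set.Icc 0 (1/(2 * Qf s))) := by
  have hQs := Qf_ge s hs
  have hq := q_pos' s hs
  have hB := bound1 s hs
  set Q := Qf s with hQdef
  have hQ8 : 8 ≤ Q := hs.trans hQs
  have hQ0 : 0 < Q := by linarith
  have hQy : ∀ y ∈ Set.Icc 0 (1/(2 * Q)), 0 ≤ y ∧ 2 * (Q * y) ≤ 1 ∧ y ≤ 1/16 := by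
    intro y hy
    have h := hy.2
    rw [le_div_iff₀ (by positivity)] at h
    have h0 := hy.1
    refine ⟨hy.1, by linarith, by nlinarith⟩
  have key := strictAnti_prod (1/(2*Q)) (14/100 * Q^2) (-(266/100) * Q^2) (24/10 * Q^2)
    (fun y => (q s + q (s * (7/10*Q*y)) + q (s * (7/10*Q*y))) / q s)
    (fun y => (1 / (1 + 14/10 * Q * y^2)) ^ Q)
    (fun y => (1 + 2 * y) ^ Q + 2 * (1 - y) ^ Q)
    (fun y => ((Real.exp (s * (7/10*Q*y)) - 1) * (s * (7/10*Q)) +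
      (Real.exp (s * (7/10*Q*y)) - 1) * (s * (7/10*Q))) / q s)
    (fun y => -(Q * (28/10 * Q * y) / (1 + 14/10 * Q * y^2)) * (1 / (1 + 14/10 * Q * y^2)) ^ Q)
    (fun y => 2 * Q * (1 + 2 * y) ^ (Q - 1) + 2 * (-1 * Q * (1 - y) ^ (Q - 1)))
    ?_ ?_ ?_ ?_ ?_ ?_ ?_ ?_ ?_ ?_
  · refine key.congr ?_
    intro y hy
    obtain ⟨hy0, hy1, hy2⟩ := hQy y hy
    simp only [OPT]
    rw [← hQdef]
    have e1 : (1:ℝ)*1 + 7/10*Q*y*y + 7/10*Q*y*y = 1 + 14/10*Q*y^2 := by ring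
    have e2 : (1:ℝ)^2 + y^2 + y^2 - 1*y - 1*y - y*y = (1-y)^2 := by ring
    have e3 : (1:ℝ) + y + y = 1 + 2*y := by ring
    have e4 : ((1-y)^2) ^ (Q/2) = (1-y)^Q := by
      rw [← Real.rpow_natCast_mul (by linarith)]
      congr 1; push_cast; ring
    rw [e1, e2, e3, e4, mul_one]
  · intro y hy
    have h1 : HasDerivAt (fun y : ℝ => s * (7/10*Q*y)) (s * (7/10*Q)) y := by
      simpa using (((hasDerivAt_id y).const_mul (7/10*Q)).const_mul s)
    have h2 := (q_deriv (s * (7/10*Q*y))).comp y h1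
    exact ((h2.const_add (q s)).add h2).div_const (q s)
  · intro y hy
    have hp : 0 < 1 + 14/10 * Q * y^2 := by positivity
    refine inv_rpow_deriv (fun y => 1 + 14/10 * Q * y^2) _ y Q ?_ hp
    have := ((hasDerivAt_pow 2 y).const_mul (14/10*Q)).const_add 1
    exact this.congr_deriv (by norm_num; ring)
  · intro y hy
    obtain ⟨hy0, hy1, hy2⟩ := hQy y hy
    have h1 : HasDerivAt (fun y : ℝ => 1 + 2 * y) 2 y := by
      simpa using ((hasDerivAt_id y).const_mul (2:ℝ)).const_add 1
    have h2 : HasDerivAt (fun y : ℝ => 1 - y) (-1) y := by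
      simpa using (hasDerivAt_id y).const_sub 1
    exact (h1.rpow_const (p := Q) (Or.inl (by linarith))).add
      ((h2.rpow_const (p := Q) (Or.inl (by linarith))).const_mul 2)
  · intro y hy
    have := q_nonneg' (s * (7/10*Q*y))
    positivity
  · intro y hy
    positivity
  · intro y hy
    obtain ⟨hy0, hy1, hy2⟩ := hQy y hy
    have : 0 < 1 - y := by linarith
    positivity
  · intro y hy
    obtain ⟨hy0, hy1, hy2⟩ := hQy y hy
    have hn := q_nonneg' (s * (7/10*Q*y))
    have hch := exp_chord (7/20*s) (2 * (Q*y)) (by positivity) hy1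
    have he : 2 * (Q*y) * (7/20*s) = s * (7/10*Q*y) := by ring
    rw [he] at hch
    show _ / q s ≤ 14/100 * Q^2 * y * (_ / q s)
    rw [mul_div_assoc', div_le_div_iff_of_pos_right hq]
    have e1 : Real.exp (s * (7/10*Q*y)) - 1 ≤ 2 * (Q*y) * Real.exp (7/20*s) := by
      have : 0 ≤ Q * y := by positivity
      linarith
    have e2 := mul_le_mul_of_nonneg_right e1 (show 0 ≤ s * (7/10*Q) by positivity)
    have e3 := mul_le_mul_of_nonneg_left hB (show 0 ≤ 14/100 * Q^2 * y by positivity)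
    have e4 : 0 ≤ 14/100 * Q^2 * y * (q (s * (7/10*Q*y)) + q (s * (7/10*Q*y))) := by positivity
    nlinarith
  · intro y hy
    obtain ⟨hy0, hy1, hy2⟩ := hQy y hy
    have hp : 0 < (1 / (1 + 14/10 * Q * y^2)) ^ Q := by positivity
    refine mul_le_mul_of_nonneg_right ?_ hp.le
    have hN : 0 < 1 + 14/10 * Q * y^2 := by positivity
    have : 266/100 * Q^2 * y ≤ Q * (28/10 * Q * y) / (1 + 14/10 * Q * y^2) := by
      rw [le_div_iff₀ hN]
      have h1 : 14/10 * Q * y^2 ≤ 7/160 := by nlinarith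
      have h2 : 0 ≤ Q^2 * y := by positivity
      nlinarith
    linarith
  · intro y hy
    obtain ⟨hy0, hy1, hy2⟩ := hQy y hy
    have hy3 : 0 < 1 - y := by linarith
    have hP : 0 < (1 + 2*y) ^ (Q-1) := by positivity
    have hS : 0 < (1 - y) ^ (Q-1) := by positivity
    have f1 : (1 + 2*y) ^ Q = (1+2*y)^(Q-1) * (1+2*y) := by
      rw [Real.rpow_sub_one (by positivity)]; field_simp
    have f2 : (1 - y) ^ Q = (1-y)^(Q-1) * (1-y) := by
      rw [Real.rpow_sub_one (by positivity)]; field_simp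
    have g1 : (1 - y) ^ (Q-1) ≤ (1 + 2*y) ^ (Q-1) := by
      apply Real.rpow_le_rpow <;> linarith
    have g2 : (1 + 2*y) ^ (Q-1) ≤ (1 - y) ^ (Q-1) * Real.exp (3*(Q*y)) := by
      have h1 : 1 + 2*y ≤ (1-y) * Real.exp (3*y) := by
        have := Real.quadratic_le_exp_of_nonneg (show 0 ≤ 3*y by positivity)
        have h := mul_le_mul_of_nonneg_left this hy3.le
        nlinarith [mul_nonneg hy0 hy0]
      have h2 := Real.rpow_le_rpow (by positivity) h1 (show 0 ≤ Q-1 by linarith)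
      rw [Real.mul_rpow hy3.le (Real.exp_pos _).le, ← Real.exp_mul] at h2
      refine h2.trans ?_
      refine mul_le_mul_of_nonneg_left (Real.exp_le_exp.2 ?_) hS.le
      nlinarith
    have g3 := exp_rat (3*(Q*y)) (by positivity)
    show _ ≤ _ * ((1 + 2*y) ^ Q + 2 * (1 - y) ^ Q)
    rw [f1, f2]
    generalize (1 + 2*y) ^ (Q-1) = P at *
    generalize (1 - y) ^ (Q-1) = S at *
    have g4 := mul_le_mul_of_nonneg_right g2 (show 0 ≤ 1 - 2/5*(3*(Q*y)) by linarith)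
    have g5 := mul_le_mul_of_nonneg_left g3 hS.le
    have g6 : P - S ≤ 2/5 * (3*(Q*y)) * (P + 2*S) := by nlinarith
    have g7 : 0 ≤ Q^2 * y * (y * (P - S)) := by
      have : 0 ≤ P - S := by linarith
      positivity
    nlinarith
  · nlinarith

/-- Part (b). -/
theorem partB (s : ℝ) (hs : 8 ≤ s) (y : ℝ) (hy : y ∈ Set.Icc (0:ℝ) (1/(2 * Qf s))) :
      StrictAntiOn
        (fun z => OPT 1 (7/10 * Qf s * (y+z)) (7/10 * Qf s * (y-z)) 1 (y+z) (y-z) s)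
        (Set.Icc 0 y) := by
  have hQs := Qf_ge s hs
  have hq := q_pos' s hs
  have hB := bound2 s hs
  set Q := Qf s with hQdef
  have hQ8 : 8 ≤ Q := hs.trans hQs
  have hQ0 : 0 < Q := by linarith
  have hy0 := hy.1
  have hy1 : 2 * (Q * y) ≤ 1 := by
    have h := hy.2
    rw [le_div_iff₀ (by positivity)] at h
    linarith
  have hy2 : y ≤ 1/16 := by nlinarith
  have hDp : ∀ z : ℝ, 8/10 ≤ (1-y)^2 + 3*z^2 := by intro z; nlinarith [sq_nonneg z]
  have key := strictAnti_prod y (3/2 * Q^2) (-(5/2) * Q^2) (1/2 * Q^2)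
    (fun z => (q s + q (s * (7/10*Q*(y+z))) + q (s * (7/10*Q*(y-z)))) / q s)
    (fun z => (1 / (1 + 14/10 * Q * (y^2 + z^2))) ^ Q)
    (fun z => (1 + 2 * y) ^ Q + 2 * ((1 - y)^2 + 3*z^2) ^ (Q/2))
    (fun z => ((Real.exp (s * (7/10*Q*(y+z))) - 1) * (s * (7/10*Q)) +
      (Real.exp (s * (7/10*Q*(y-z))) - 1) * (-(s * (7/10*Q)))) / q s)
    (fun z => -(Q * (28/10 * Q * z) / (1 + 14/10 * Q * (y^2+z^2))) *
      (1 / (1 + 14/10 * Q * (y^2 + z^2))) ^ Q)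
    (fun z => 2 * (6 * z * (Q/2) * ((1 - y)^2 + 3*z^2) ^ (Q/2 - 1)))
    ?_ ?_ ?_ ?_ ?_ ?_ ?_ ?_ ?_ ?_
  · refine key.congr ?_
    intro z hz
    simp only [OPT]
    rw [← hQdef]
    have e1 : (1:ℝ)*1 + 7/10*Q*(y+z)*(y+z) + 7/10*Q*(y-z)*(y-z) = 1 + 14/10*Q*(y^2+z^2) := by ring
    have e2 : (1:ℝ)^2 + (y+z)^2 + (y-z)^2 - 1*(y+z) - 1*(y-z) - (y+z)*(y-z)
      = (1-y)^2 + 3*z^2 := by ring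
    have e3 : (1:ℝ) + (y+z) + (y-z) = 1 + 2*y := by ring
    rw [e1, e2, e3, mul_one]
  · intro z hz
    have h1 : HasDerivAt (fun z : ℝ => s * (7/10*Q*(y+z))) (s * (7/10*Q)) z := by
      simpa using ((((hasDerivAt_id z).const_add y).const_mul (7/10*Q)).const_mul s)
    have h1' : HasDerivAt (fun z : ℝ => s * (7/10*Q*(y-z))) (-(s * (7/10*Q))) z := by
      simpa using ((((hasDerivAt_id z).const_sub y).const_mul (7/10*Q)).const_mul s)
    have h2 := (q_deriv (s * (7/10*Q*(y+z)))).comp z h1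
    have h2' := (q_deriv (s * (7/10*Q*(y-z)))).comp z h1'
    exact ((h2.const_add (q s)).add h2').div_const (q s)
  · intro z hz
    have hp : 0 < 1 + 14/10 * Q * (y^2 + z^2) := by positivity
    refine inv_rpow_deriv (fun z => 1 + 14/10 * Q * (y^2 + z^2)) _ z Q ?_ hp
    have := (((hasDerivAt_pow 2 z).const_add (y^2)).const_mul (14/10*Q)).const_add 1
    exact this.congr_deriv (by norm_num; ring)
  · intro z hz
    have h1 : HasDerivAt (fun z : ℝ => (1-y)^2 + 3*z^2) (6*z) z := by
      have := ((hasDerivAt_pow 2 z).const_mul (3:ℝ)).const_add ((1-y)^2)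
      exact this.congr_deriv (by norm_num; ring)
    have := hDp z
    exact ((h1.rpow_const (p := Q/2) (Or.inl (by linarith))).const_mul 2).const_add _
  · intro z hz
    have := q_nonneg' (s * (7/10*Q*(y+z)))
    have := q_nonneg' (s * (7/10*Q*(y-z)))
    positivity
  · intro z hz
    positivity
  · intro z hz
    have := hDp z
    have : 0 < (1-y)^2 + 3*z^2 := by linarith
    positivity
  · intro z hz
    obtain ⟨hz0, hzy⟩ := hz
    have hn := q_nonneg' (s * (7/10*Q*(y+z)))
    have hn' := q_nonneg' (s * (7/10*Q*(y-z)))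
    have hz1 : 2 * (Q*z) ≤ 1 := by nlinarith
    have hch := sinh_chord (7/20*s) (2 * (Q*z)) (by positivity) (by positivity) hz1
    have he : 2 * (Q*z) * (7/20*s) = s * (7/10*Q*z) := by ring
    rw [he] at hch
    show _ / q s ≤ 3/2 * Q^2 * z * (_ / q s)
    rw [mul_div_assoc', div_le_div_iff_of_pos_right hq]
    have e1 : Real.exp (s * (7/10*Q*z)) - Real.exp (-(s * (7/10*Q*z)))
        ≤ 2 * (Q*z) * Real.exp (7/20*s) := by
      have h0 : 0 ≤ Q * z := by positivity
      have := mul_nonneg h0 (Real.exp_pos (-(7/20*s))).le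
      nlinarith
    have e5 : Real.exp (s * (7/10*Q*y)) ≤ Real.exp (7/20*s) := by
      apply Real.exp_le_exp.2
      nlinarith
    have e6 : Real.exp (s * (7/10*Q*(y+z))) - Real.exp (s * (7/10*Q*(y-z)))
        ≤ Real.exp (7/20*s) * (2 * (Q*z) * Real.exp (7/20*s)) := by
      have i1 : Real.exp (s * (7/10*Q*(y+z))) =
          Real.exp (s * (7/10*Q*y)) * Real.exp (s * (7/10*Q*z)) := by
        rw [← Real.exp_add]; ring_nf
      have i2 : Real.exp (s * (7/10*Q*(y-z))) =
          Real.exp (s * (7/10*Q*y)) * Real.exp (-(s * (7/10*Q*z))) := by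
        rw [← Real.exp_add]; ring_nf
      rw [i1, i2, ← mul_sub]
      refine (mul_le_mul_of_nonneg_left e1 (Real.exp_pos _).le).trans ?_
      exact mul_le_mul_of_nonneg_right e5 (by positivity)
    have e2 := mul_le_mul_of_nonneg_right e6 (show 0 ≤ s * (7/10*Q) by positivity)
    have e3 := mul_le_mul_of_nonneg_left hB (show 0 ≤ 1/10 * Q^2 * z by positivity)
    have e4 : 0 ≤ 3/2 * Q^2 * z * (q (s * (7/10*Q*(y+z))) + q (s * (7/10*Q*(y-z)))) := by
      positivity
    nlinarith
  · intro z hz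
    obtain ⟨hz0, hzy⟩ := hz
    have hp : 0 < (1 / (1 + 14/10 * Q * (y^2+z^2))) ^ Q := by positivity
    refine mul_le_mul_of_nonneg_right ?_ hp.le
    have hN : 0 < 1 + 14/10 * Q * (y^2+z^2) := by positivity
    have : 5/2 * Q^2 * z ≤ Q * (28/10 * Q * z) / (1 + 14/10 * Q * (y^2+z^2)) := by
      rw [le_div_iff₀ hN]
      have h0 : z^2 ≤ y^2 := by gcongr
      have h1 : Q * y^2 ≤ 1/32 := by nlinarith
      have h3 : Q * z^2 ≤ Q * y^2 := by gcongr
      have h2 : 0 ≤ Q^2 * z := by positivity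
      have h4 : 14/10 * Q * (y^2+z^2) ≤ 7/80 := by linarith
      nlinarith
    linarith
  · intro z hz
    obtain ⟨hz0, hzy⟩ := hz
    have hD := hDp z
    generalize (1-y)^2 + 3*z^2 = D at *
    have hD0 : 0 < D := by linarith
    have f1 : D ^ (Q/2) = D^(Q/2-1) * D := by
      rw [Real.rpow_sub_one hD0.ne']; field_simp
    have hE : 0 < (1+2*y)^Q := by positivity
    have hT : 0 < D^(Q/2-1) := by positivity
    rw [f1]
    generalize D^(Q/2-1) = T at *
    have g1 : 0 ≤ 1/2 * Q^2 * z * (1+2*y)^Q := by positivity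
    have g2 : 8/10 * T ≤ T * D := by nlinarith
    have g3 := mul_le_mul_of_nonneg_left g2 (show 0 ≤ Q^2 * z by positivity)
    have g4 : 8 * (Q * z * T) ≤ Q * (Q * z * T) :=
      mul_le_mul_of_nonneg_right hQ8 (by positivity)
    nlinarith
  · nlinarith

theorem stmt6 (s : ℝ) (hs : 8 ≤ s) :
    (StrictAntiOn
        (fun y => OPT 1 (7/10 * Qf s * y) (7/10 * Qf s * y) 1 y y s)
        (Set.Icc 0 (1/(2 * Qf s))) ∧
      OPT 1 (7/10 * Qf s * 0) (7/10 * Qf s * 0) 1 0 0 s = 3) ∧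
    ∀ y ∈ Set.Icc (0:ℝ) (1/(2 * Qf s)),
      AntitoneOn
        (fun z => OPT 1 (7/10 * Qf s * (y+z)) (7/10 * Qf s * (y-z)) 1 (y+z) (y-z) s)
        (Set.Icc 0 y) := by
  refine ⟨⟨partA s hs, ?_⟩, fun y hy => (partB s hs y hy).antitoneOn⟩
  have hq := q_pos' s hs
  simp [OPT, q]
  have h : Real.exp s - s - 1 ≠ 0 := hq.ne'
  rw [div_self h]
  norm_num
end

section
/- There exists δ > 0 such that for every s ≥ 7, every C with 1/(2Q) ≤ C ≤ 1/2, and every z with 0 ≤ z ≤ C: OPT(1, 1−1/Q, 1−1/Q, 1, C+z, C−z, s) ≤ 3 − δ. -/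
lemma aux_poly (t : ℝ) (h1 : 1/7 ≤ t) (h2 : t ≤ 1) :
    (1+t)^7 + (1-t+t^2)^3*(2-t+t^2) ≤ 1.72 * (1+6*t/7)^7 := by
  have a : 0 ≤ t - 1/7 := by linarith
  have b : 0 ≤ 1 - t := by linarith
  have m : ∀ i j : ℕ, 0 ≤ (t-1/7)^i * (1-t)^j := fun i j => by positivity
  have m0 := m 0 8
  have m1 := m 1 7
  have m2 := m 2 6
  have m3 := m 3 5
  have m4 := m 4 4
  have m5 := m 5 3
  have m6 := m 6 2
  have m7 := m 7 1
  have m8 := m 8 0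
  clear m a b
  linarith

lemma aux_Q (s : ℝ) (hs : 7 ≤ s) : 7 ≤ Qf s := by
  have h := Real.add_one_lt_exp (x := s) (by linarith)
  unfold Qf
  rw [le_div_iff₀ (by linarith)]
  nlinarith

lemma aux_opt1 (s : ℝ) (hs : 7 ≤ s) :
    (q (s*1) + q (s*(1-1/Qf s)) + q (s*(1-1/Qf s))) / q s ≤ 1.7405 := by
  have h := Real.add_one_lt_exp (x := s) (by linarith)
  have hE : 1096 * (s - 6) ≤ Real.exp s := by
    have e1 : (1096:ℝ) ≤ Real.exp 7 := by
      have : Real.exp 7 = Real.exp 1 ^ 7 := by rw [← Real.exp_nat_mul]; norm_num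
      rw [this]
      calc (1096:ℝ) ≤ 2.7182818283 ^ 7 := by norm_num
        _ ≤ _ := by
          have := Real.exp_one_gt_d9
          gcongr
    have e2 : Real.exp s = Real.exp 7 * Real.exp (s-7) := by rw [← Real.exp_add]; ring_nf
    have e3 := Real.add_one_le_exp (s-7)
    rw [e2]
    have : 0 ≤ s - 6 := by linarith
    calc 1096 * (s-6) ≤ Real.exp 7 * (s-6) := by gcongr
      _ ≤ _ := by gcongr; linarith
  set ε : ℝ := s / (Real.exp s - 1) with hε
  have hε0 : 0 ≤ ε := div_nonneg (by linarith) (by linarith)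
  have hε1 : ε ≤ 0.0064 := by
    rw [hε, div_le_iff₀ (by linarith)]
    nlinarith
  have hsa : s*(1-1/Qf s) = s + (-1 + ε) := by
    rw [hε]; unfold Qf
    have : Real.exp s - 1 ≠ 0 := by linarith
    have : Real.exp s - s - 1 ≠ 0 := by linarith
    have : s ≠ 0 := by linarith
    field_simp
    ring
  have hb : Real.exp (-1 + ε) ≤ 0.37025 := by
    have e1 : Real.exp (-1+ε) * Real.exp (1-ε) = 1 := by rw [← Real.exp_add]; simp
    have e2 : Real.exp (1-ε) = Real.exp 1 * Real.exp (-ε) := by rw [← Real.exp_add]; ring_nf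
    have e3 := Real.add_one_le_exp (-ε)
    have e4 := Real.exp_one_gt_d9
    have e5 : (2.70088:ℝ) ≤ Real.exp (1-ε) := by
      rw [e2]
      calc (2.70088:ℝ) ≤ 2.7182818283 * 0.9936 := by norm_num
        _ ≤ _ := by gcongr; linarith
    have := Real.exp_pos (-1+ε)
    nlinarith
  have hq : 0 < q s := by unfold q; linarith
  rw [div_le_iff₀ hq, mul_one, hsa]
  have key : q (s + (-1+ε)) ≤ 0.37025 * q s := by
    unfold q
    rw [Real.exp_add]
    have := mul_le_mul_of_nonneg_left hb (Real.exp_pos s).le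
    nlinarith
  nlinarith

lemma aux_first (Q t : ℝ) (hQ : 7 ≤ Q) (h0 : 0 ≤ t) :
    (1 / (1 + t*(1-1/Q)))^Q * (1+t)^Q ≤ ((1+t)/(1+6*t/7))^7 := by
  have hQ0 : 0 < Q := by linarith
  have hi : 1/Q ≤ 1/7 := by gcongr
  have hi0 : 0 < 1/Q := by positivity
  have hD : 0 < 1 + t*(1-1/Q) := by nlinarith
  have hw : 0 ≤ t/(1+t) := by positivity
  have hw1 : t/(1+t) ≤ 1 := by rw [div_le_one (by linarith)]; linarith
  have hB := one_add_mul_self_le_rpow_one_add (s := -(t/(1+t)*(1/Q))) (by nlinarith)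
    (p := Q/7) (by linarith)
  have r1 : 1 + Q/7 * -(t/(1+t)*(1/Q)) = (1+6*t/7)/(1+t) := by
    field_simp; ring
  have r2 : 1 + -(t/(1+t)*(1/Q)) = (1 + t*(1-1/Q))/(1+t) := by
    field_simp; ring
  rw [r1, r2] at hB
  have hX : 0 < (1 + t*(1-1/Q))/(1+t) := by positivity
  have h7 : ((1+6*t/7)/(1+t))^7 ≤ ((1 + t*(1-1/Q))/(1+t))^Q := by
    calc ((1+6*t/7)/(1+t))^7 ≤ (((1 + t*(1-1/Q))/(1+t))^(Q/7))^7 := by gcongr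
      _ = _ := by
        rw [← Real.rpow_natCast, ← Real.rpow_mul hX.le]; norm_num
  rw [← Real.mul_rpow (by positivity) (by positivity)]
  have r3 : 1 / (1 + t*(1-1/Q)) * (1+t) = ((1 + t*(1-1/Q))/(1+t))⁻¹ := by
    rw [inv_div]; ring
  have r4 : ((1+t)/(1+6*t/7))^7 = (((1+6*t/7)/(1+t))^7)⁻¹ := by
    rw [← inv_pow, inv_div]
  rw [r3, Real.inv_rpow hX.le, r4]
  gcongr

lemma aux_second (Q t Y : ℝ) (hQ : 7 ≤ Q) (h0 : 0 ≤ t) (hY : 0 ≤ Y)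
    (hY1 : Y ≤ 1 - t + t^2) :
    (1 / (1 + t*(1-1/Q)))^Q * Y^(Q/2) ≤ ((1-t+t^2)/(1+6*t/7)^2)^(Q/2) := by
  have hi : 1/Q ≤ 1/7 := by gcongr
  have hD : 1+6*t/7 ≤ 1 + t*(1-1/Q) := by nlinarith
  have hD' : 0 < 1+6*t/7 := by positivity
  have hD0 : 0 < 1 + t*(1-1/Q) := by linarith
  have : (1 / (1 + t*(1-1/Q)))^Q = (1 / (1 + t*(1-1/Q))^2)^(Q/2) := by
    rw [← one_div_pow, ← Real.rpow_natCast, ← Real.rpow_mul (by positivity)]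
    congr 1; push_cast; ring
  rw [this, ← Real.mul_rpow (by positivity) hY]
  have e : 1 / (1 + t*(1-1/Q))^2 * Y = Y / (1 + t*(1-1/Q))^2 := by ring
  rw [e]
  have hp : 0 ≤ 1 - t + t^2 := le_trans hY hY1
  gcongr

lemma aux_mid (Q t : ℝ) (hQ : 7 ≤ Q) (h0 : 1/7 ≤ t) (h1 : t ≤ 1) :
    ((1+t)/(1+6*t/7))^7 + 2 * ((1-t+t^2)/(1+6*t/7)^2)^(Q/2) ≤ 1.72 := by
  have hy : 0 < 1-t+t^2 := by nlinarith
  have hD : 0 < 1+6*t/7 := by positivity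
  have hb1 : (1-t+t^2)/(1+6*t/7)^2 ≤ 1 := by
    rw [div_le_one (by positivity)]; nlinarith
  have hb0 : 0 < (1-t+t^2)/(1+6*t/7)^2 := by positivity
  have h2 : ((1-t+t^2)/(1+6*t/7)^2)^(Q/2) ≤ (1-t+t^2)^3 * ((2-t+t^2)/2) / (1+6*t/7)^7 := by
    calc ((1-t+t^2)/(1+6*t/7)^2)^(Q/2) ≤ ((1-t+t^2)/(1+6*t/7)^2)^((3:ℝ) + 1/2) := by
          apply Real.rpow_le_rpow_of_exponent_ge hb0 hb1; linarith
      _ = ((1-t+t^2)/(1+6*t/7)^2)^3 * (Real.sqrt (1-t+t^2) / (1+6*t/7)) := by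
          rw [Real.rpow_add hb0, ← Real.sqrt_eq_rpow, Real.sqrt_div hy.le, Real.sqrt_sq hD.le]
          norm_cast
      _ ≤ ((1-t+t^2)/(1+6*t/7)^2)^3 * (((2-t+t^2)/2) / (1+6*t/7)) := by
          gcongr
          rw [Real.sqrt_le_left (by linarith)]
          nlinarith [sq_nonneg (t-t^2)]
      _ = _ := by field_simp
  have h3 := aux_poly t h0 h1
  calc _ ≤ ((1+t)/(1+6*t/7))^7 + 2 * ((1-t+t^2)^3 * ((2-t+t^2)/2) / (1+6*t/7)^7) := by gcongr
    _ = ((1+t)^7 + (1-t+t^2)^3*(2-t+t^2)) / (1+6*t/7)^7 := by rw [div_pow]; ring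
    _ ≤ 1.72 := by rw [div_le_iff₀ (by positivity)]; exact h3

lemma aux_small (Q t : ℝ) (hQ : 7 ≤ Q) (ht : 1/Q ≤ t) (h1 : t ≤ 1/7) :
    ((1+t)/(1+6*t/7))^7 + 2 * ((1-t+t^2)/(1+6*t/7)^2)^(Q/2) ≤ 1.72 := by
  have h0 : 0 < t := lt_of_lt_of_le (by positivity) ht
  have hy : 0 < 1-t+t^2 := by nlinarith
  have hD : 0 < 1+6*t/7 := by positivity
  have hk : 0 < 1 + 1.35*t := by positivity
  have hf : ((1+t)/(1+6*t/7))^7 ≤ (56/55)^7 := by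
    have : (1+t)/(1+6*t/7) ≤ 56/55 := by
      rw [div_le_div_iff₀ hD (by norm_num)]; linarith
    exact pow_le_pow_left₀ (by positivity) this 7
  have hb : (1-t+t^2)/(1+6*t/7)^2 ≤ ((1 + 1.35*t)⁻¹)^2 := by
    rw [inv_pow, ← one_div, div_le_div_iff₀ (by positivity) (by positivity)]
    nlinarith [mul_pos h0 h0, mul_nonneg h0.le (sub_nonneg.2 h1),
      mul_nonneg (mul_pos h0 h0).le (sub_nonneg.2 h1),
      mul_nonneg (mul_pos (mul_pos h0 h0) h0).le (sub_nonneg.2 h1)]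
  have hB := one_add_mul_self_le_rpow_one_add (s := 1.35*t) (by linarith)
    (p := 1/(7*t)) (by rw [le_div_iff₀ (by positivity)]; linarith)
  have r1 : 1 + 1/(7*t) * (1.35*t) = 1 + 1.35/7 := by field_simp
  rw [r1] at hB
  have hQt : 1/t ≤ Q := by
    rw [div_le_iff₀ h0]; rw [div_le_iff₀ (by linarith)] at ht; linarith
  have h7 : (1 + 1.35/7 : ℝ)^7 ≤ (1 + 1.35*t)^Q := by
    calc (1 + 1.35/7 : ℝ)^7 ≤ ((1 + 1.35*t)^(1/(7*t)))^7 := by gcongr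
      _ = (1 + 1.35*t)^(1/t) := by
        rw [← Real.rpow_natCast, ← Real.rpow_mul hk.le]
        congr 1; push_cast; field_simp
      _ ≤ _ := Real.rpow_le_rpow_of_exponent_le (by linarith) hQt
  have h2 : ((1-t+t^2)/(1+6*t/7)^2)^(Q/2) ≤ ((1 + 1.35/7 : ℝ)^7)⁻¹ := by
    calc ((1-t+t^2)/(1+6*t/7)^2)^(Q/2) ≤ (((1 + 1.35*t)⁻¹)^2)^(Q/2) := by gcongr
      _ = ((1 + 1.35*t)^Q)⁻¹ := by
        rw [← Real.rpow_natCast, ← Real.rpow_mul (by positivity), ← Real.inv_rpow hk.le]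
        congr 1; push_cast; ring
      _ ≤ _ := by gcongr
  calc _ ≤ (56/55 : ℝ)^7 + 2 * ((1 + 1.35/7 : ℝ)^7)⁻¹ := by gcongr
    _ ≤ 1.72 := by norm_num

theorem stmt8 :
    ∃ δ : ℝ, 0 < δ ∧ ∀ s : ℝ, 7 ≤ s →
      ∀ C : ℝ, 1/(2 * Qf s) ≤ C → C ≤ 1/2 →
        ∀ z : ℝ, 0 ≤ z → z ≤ C →
          OPT 1 (1 - 1/(Qf s)) (1 - 1/(Qf s)) 1 (C + z) (C - z) s ≤ 3 - δ := by
  refine ⟨0.006, by norm_num, fun s hs C hC hC2 z hz hzC => ?_⟩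
  have hQ := aux_Q s hs
  have h1 := aux_opt1 s hs
  unfold OPT
  generalize Qf s = Q at *
  have ht : 1/Q ≤ 2*C := by
    have : 1/Q = 2 * (1/(2*Q)) := by field_simp
    linarith
  have hC0 : 0 ≤ C := le_trans hz hzC
  have hi : 1/Q ≤ 1/7 := by gcongr
  have e1 : 1*1 + (1-1/Q)*(C+z) + (1-1/Q)*(C-z) = 1 + (2*C)*(1-1/Q) := by ring
  have e2 : 1 + (C+z) + (C-z) = 1 + 2*C := by ring
  have e3 : (1:ℝ)^2 + (C+z)^2 + (C-z)^2 - 1*(C+z) - 1*(C-z) - (C+z)*(C-z)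
      = (1-C)^2 + 3*z^2 := by ring
  rw [e1, e2, e3, mul_assoc]
  have f1 := aux_first Q (2*C) hQ (by linarith)
  have f2 := aux_second Q (2*C) ((1-C)^2 + 3*z^2) hQ (by linarith) (by positivity) (by nlinarith)
  have f3 : ((1+2*C)/(1+6*(2*C)/7))^7
      + 2 * ((1-2*C+(2*C)^2)/(1+6*(2*C)/7)^2)^(Q/2) ≤ 1.72 := by
    rcases le_total (2*C) (1/7) with h | h
    · exact aux_small Q _ hQ ht h
    · exact aux_mid Q _ hQ h (by linarith)
  have hD0 : 0 ≤ 1 / (1 + 2*C*(1-1/Q)) := by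
    apply div_nonneg (by norm_num); nlinarith
  have f4 : (1 / (1 + 2*C*(1-1/Q)))^Q * ((1+2*C)^Q + 2 * ((1-C)^2+3*z^2)^(Q/2)) ≤ 1.72 := by
    linarith
  have f5 : 0 ≤ (1 / (1 + 2*C*(1-1/Q)))^Q * ((1+2*C)^Q + 2 * ((1-C)^2+3*z^2)^(Q/2)) := by
    positivity
  calc _ ≤ 1.7405 * (1.72:ℝ) := mul_le_mul h1 f4 f5 (by norm_num)
    _ ≤ _ := by norm_num
end

section
/- Let λ̄ = (λ₀,λ₁,λ₂) with each λᵢ > 0 and λ₀+λ₁+λ₂ = 1, and let λ = max(λ₀,λ₁,λ₂). Let a₀,a₁,a₂,c₀,c₁,c₂ > 0 satisfy aᵢ·cᵢ = λᵢ/λ for i = 0,1,2. Then for every ω̄ = (ω₀,ω₁,ω₂) with ωᵢ ≥ 0 and ω₀+ω₁+ω₂ = 1: Ψ(ω̄, λ̄, (a₀s, a₁s, a₂s), (c₀,c₁,c₂)) ≤ 3^{−γ} · OPT((a₀,a₁,a₂), (c₀,c₁,c₂), s). -/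
/-- `r(y₀,y₁,y₂) = Σ (k choose k₀,k₁,k₂)·y₀^{k₀}·y₁^{k₁}·y₂^{k₂}`, summed over all
`k₀+k₁+k₂ = k` with `k₁ ≡ k₂ (mod 3)`. -/
noncomputable def r (k : ℕ) (y₀ y₁ y₂ : ℝ) : ℝ :=
  ∑ t ∈ (Finset.Nat.antidiagonalTuple 3 k).filter (fun t => t 1 % 3 = t 2 % 3),
    (Nat.multinomial Finset.univ t : ℝ) * y₀ ^ t 0 * y₁ ^ t 1 * y₂ ^ t 2

/-- `Ψ(ω̄,λ̄,x̄,ȳ)`; real powers are `rpow`, so the convention `0^0 = 1` holds. -/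
noncomputable def Psi (k : ℕ) (γ s : ℝ) (ω lam x y : Fin 3 → ℝ) : ℝ :=
  (∏ i, (q (x i) / (ω i * q s)) ^ (ω i)) *
  ((∏ i, (lam i * s / (x i * y i)) ^ (lam i)) ^ ((k:ℝ) * γ)) *
  (r k (y 0) (y 1) (y 2)) ^ γ


lemma q_pos'_s10 {x : ℝ} (hx : 0 < x) : 0 < q x := by
  have := Real.add_one_lt_exp hx.ne'
  unfold q; linarith

lemma expand_w (k : ℕ) (y₀ y₁ y₂ : ℝ) (w : ℂ) :
    ((y₀:ℂ) + w * y₁ + w^2 * y₂)^k =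
      ∑ t ∈ Finset.Nat.antidiagonalTuple 3 k,
        ((Nat.multinomial Finset.univ t : ℂ) * (y₀:ℂ) ^ t 0 * (y₁:ℂ) ^ t 1 * (y₂:ℂ) ^ t 2)
          * w ^ (t 1 + 2 * t 2) := by
  have h := Finset.sum_pow_eq_sum_piAntidiag (Finset.univ : Finset (Fin 3))
    (![(y₀:ℂ), w * y₁, w^2 * y₂]) k
  have he : Finset.piAntidiag (Finset.univ : Finset (Fin 3)) k
      = Finset.Nat.antidiagonalTuple 3 k := by
    ext t; simp [Finset.mem_piAntidiag, Finset.Nat.mem_antidiagonalTuple]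
  rw [he] at h
  simp only [Fin.sum_univ_three, Fin.prod_univ_three] at h
  simp at h
  rw [h]
  refine Finset.sum_congr rfl fun t _ => ?_
  rw [mul_pow, mul_pow, pow_add, pow_mul]
  ring

lemma three_r (k : ℕ) (y₀ y₁ y₂ : ℝ) (w : ℂ) (hw : 1 + w + w^2 = 0) :
    (3 * (r k y₀ y₁ y₂ : ℝ) : ℂ) = ((y₀:ℂ) + 1 * y₁ + 1^2 * y₂)^k
      + ((y₀:ℂ) + w * y₁ + w^2 * y₂)^k + ((y₀:ℂ) + w^2 * y₁ + (w^2)^2 * y₂)^k := by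
  have h3 : w^3 = 1 := by linear_combination (w - 1) * hw
  rw [expand_w, expand_w, expand_w, ← Finset.sum_add_distrib, ← Finset.sum_add_distrib]
  unfold r
  push_cast
  rw [Finset.sum_filter, Finset.mul_sum]
  refine Finset.sum_congr rfl fun t _ => ?_
  have key : (1:ℂ) + w ^ (t 1 + 2 * t 2) + (w^2) ^ (t 1 + 2 * t 2)
      = if t 1 % 3 = t 2 % 3 then 3 else 0 := by
    have hp : ∀ m, w ^ m = w ^ (m % 3) := fun m => by
      conv_lhs => rw [← Nat.div_add_mod m 3, pow_add, pow_mul, h3, one_pow, one_mul]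
    rw [← pow_mul, hp (t 1 + 2 * t 2), hp (2 * (t 1 + 2 * t 2))]
    have h1 : t 1 % 3 < 3 := Nat.mod_lt _ (by norm_num)
    have h2 : t 2 % 3 < 3 := Nat.mod_lt _ (by norm_num)
    have e1 : (t 1 + 2 * t 2) % 3 = (t 1 % 3 + 2 * (t 2 % 3)) % 3 := by omega
    have e2 : (2 * (t 1 + 2 * t 2)) % 3 = (2 * (t 1 % 3 + 2 * (t 2 % 3))) % 3 := by omega
    rw [e1, e2]
    generalize t 1 % 3 = u at *
    generalize t 2 % 3 = v at *
    interval_cases u <;> interval_cases v <;> norm_num <;> linear_combination hw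
  split_ifs at key ⊢
  · rw [one_pow]; linear_combination -(Nat.multinomial Finset.univ t * (y₀:ℂ) ^ t 0 * (y₁:ℂ) ^ t 1 * (y₂:ℂ) ^ t 2) * key
  · rw [one_pow]; linear_combination -(Nat.multinomial Finset.univ t * (y₀:ℂ) ^ t 0 * (y₁:ℂ) ^ t 1 * (y₂:ℂ) ^ t 2) * key

lemma r_le (k : ℕ) (y₀ y₁ y₂ : ℝ) (h0 : 0 < y₀) (h1 : 0 < y₁) (h2 : 0 < y₂) :
    ∃ N : ℝ, 0 ≤ N ∧ N^2 = y₀^2 + y₁^2 + y₂^2 - y₀*y₁ - y₀*y₂ - y₁*y₂ ∧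
      3 * r k y₀ y₁ y₂ ≤ (y₀+y₁+y₂)^k + N^k + N^k := by
  have hs3 : (√3:ℝ)^2 = 3 := Real.sq_sqrt (by norm_num)
  have hw2 : (⟨-1/2, √3/2⟩ : ℂ)^2 = ⟨-1/2, -(√3/2)⟩ := by
    rw [sq]; apply Complex.ext
    · simp; nlinarith
    · simp; ring
  have hw4 : (⟨-1/2, -(√3/2)⟩ : ℂ)^2 = ⟨-1/2, √3/2⟩ := by
    rw [sq]; apply Complex.ext
    · simp; nlinarith
    · simp; ring
  have hw : 1 + (⟨-1/2, √3/2⟩ : ℂ) + (⟨-1/2, √3/2⟩ : ℂ)^2 = 0 := by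
    rw [hw2]; apply Complex.ext
    · simp; norm_num
    · simp
  have h := three_r k y₀ y₁ y₂ _ hw
  rw [hw2, hw4] at h
  set A : ℂ := (y₀:ℂ) + ⟨-1/2, √3/2⟩ * y₁ + ⟨-1/2, -(√3/2)⟩ * y₂ with hA
  set B : ℂ := (y₀:ℂ) + ⟨-1/2, -(√3/2)⟩ * y₁ + ⟨-1/2, √3/2⟩ * y₂ with hB
  have nA : ‖A‖^2 = y₀^2 + y₁^2 + y₂^2 - y₀*y₁ - y₀*y₂ - y₁*y₂ := by
    rw [← Complex.normSq_eq_norm_sq, Complex.normSq_apply, hA]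
    simp
    linear_combination ((y₁ - y₂)^2/4) * hs3
  have nB : ‖B‖^2 = y₀^2 + y₁^2 + y₂^2 - y₀*y₁ - y₀*y₂ - y₁*y₂ := by
    rw [← Complex.normSq_eq_norm_sq, Complex.normSq_apply, hB]
    simp
    linear_combination ((y₁ - y₂)^2/4) * hs3
  have nAB : ‖B‖ = ‖A‖ := by
    rw [← sq_eq_sq₀ (norm_nonneg _) (norm_nonneg _), nA, nB]
  refine ⟨‖A‖, norm_nonneg _, nA, ?_⟩
  have hS : ‖((y₀:ℂ) + 1 * y₁ + 1^2 * y₂)‖ = y₀ + y₁ + y₂ := by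
    have : ((y₀:ℂ) + 1 * y₁ + 1^2 * y₂) = ((y₀ + y₁ + y₂ : ℝ) : ℂ) := by push_cast; ring
    rw [this, Complex.norm_real, Real.norm_of_nonneg (by positivity)]
  have e : (3 * (r k y₀ y₁ y₂ : ℝ) : ℂ) = ((3 * r k y₀ y₁ y₂ : ℝ) : ℂ) := by push_cast; ring
  calc 3 * r k y₀ y₁ y₂ ≤ ‖((3 * r k y₀ y₁ y₂ : ℝ) : ℂ)‖ := by
        rw [Complex.norm_real]; exact le_abs_self _
    _ ≤ _ := by
        rw [← e, h]
        refine (norm_add₃_le).trans ?_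
        rw [norm_pow, norm_pow, norm_pow, nAB, hS]

lemma r_nonneg (k : ℕ) (y₀ y₁ y₂ : ℝ) (h0 : 0 < y₀) (h1 : 0 < y₁) (h2 : 0 < y₂) :
    0 ≤ r k y₀ y₁ y₂ := by
  unfold r; exact Finset.sum_nonneg fun t _ => by positivity

lemma r_rpow_le (k : ℕ) (γ : ℝ) (hγ : γ ∈ Set.Ioo (0:ℝ) 1) (y₀ y₁ y₂ : ℝ)
    (h0 : 0 < y₀) (h1 : 0 < y₁) (h2 : 0 < y₂) :
    (r k y₀ y₁ y₂)^γ ≤ (3:ℝ)^(-γ) * ((y₀+y₁+y₂) ^ ((k:ℝ)*γ) +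
    2 * (y₀^2 + y₁^2 + y₂^2 - y₀*y₁ - y₀*y₂ - y₁*y₂) ^ ((k:ℝ)*γ / 2)) := by
  obtain ⟨N, hN, hN2, hr⟩ := r_le k y₀ y₁ y₂ h0 h1 h2
  have hr0 := r_nonneg k y₀ y₁ y₂ h0 h1 h2
  have hS : 0 ≤ y₀ + y₁ + y₂ := by positivity
  have e : (N^2) ^ ((k:ℝ)*γ/2) = (N^k)^γ := by
    rw [← Real.rpow_natCast N 2, ← Real.rpow_natCast N k, ← Real.rpow_mul hN,
      ← Real.rpow_mul hN]
    congr 1; push_cast; ring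
  rw [← hN2, e, Real.rpow_mul hS, Real.rpow_natCast]
  have h3 : (3 * r k y₀ y₁ y₂)^γ ≤ ((y₀+y₁+y₂)^k)^γ + 2 * (N^k)^γ := by
    calc _ ≤ ((y₀+y₁+y₂)^k + N^k + N^k)^γ := Real.rpow_le_rpow (by positivity) hr hγ.1.le
      _ ≤ ((y₀+y₁+y₂)^k + N^k)^γ + (N^k)^γ :=
        Real.rpow_add_le_add_rpow (by positivity) (by positivity) hγ.1.le hγ.2.le
      _ ≤ ((y₀+y₁+y₂)^k)^γ + (N^k)^γ + (N^k)^γ := by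
        gcongr
        exact Real.rpow_add_le_add_rpow (by positivity) (by positivity) hγ.1.le hγ.2.le
      _ = _ := by ring
  rw [Real.mul_rpow (by norm_num) hr0] at h3
  rw [Real.rpow_neg (by norm_num), inv_mul_eq_div, le_div_iff₀ (by positivity), mul_comm]
  exact h3

theorem stmt10 (k : ℕ) (hk : 3 ≤ k) (γ : ℝ) (hγ : γ ∈ Set.Ioo (0:ℝ) 1)
    (hkγ : 2 < (k:ℝ) * γ) (s : ℝ) (hs : 0 < s) (hQs : Qf s = (k:ℝ) * γ)
    (lam : Fin 3 → ℝ) (hlam : ∀ i, 0 < lam i) (hlamsum : lam 0 + lam 1 + lam 2 = 1)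
    (a c : Fin 3 → ℝ) (ha : ∀ i, 0 < a i) (hc : ∀ i, 0 < c i)
    (hac : ∀ i, a i * c i = lam i / max (lam 0) (max (lam 1) (lam 2))) :
    ∀ ω : Fin 3 → ℝ, (∀ i, 0 ≤ ω i) → ω 0 + ω 1 + ω 2 = 1 →
      Psi k γ s ω lam (fun i => a i * s) c ≤
        (3:ℝ) ^ (-γ) * OPT (a 0) (a 1) (a 2) (c 0) (c 1) (c 2) s := by
  intro ω hω hωs
  have hL : 0 < max (lam 0) (max (lam 1) (lam 2)) := lt_max_of_lt_left (hlam 0)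
  set L := max (lam 0) (max (lam 1) (lam 2)) with hLdef
  have hqs := q_pos'_s10 hs
  have hqa : ∀ i, 0 < q (a i * s) := fun i => q_pos'_s10 (mul_pos (ha i) hs)
  -- first factor
  have hF1 : (∏ i, (q (a i * s) / (ω i * q s)) ^ (ω i)) ≤
      (q (s * a 0) + q (s * a 1) + q (s * a 2)) / q s := by
    have hz : ∀ i, 0 ≤ q (a i * s) / (ω i * q s) := fun i =>
      div_nonneg (hqa i).le (mul_nonneg (hω i) hqs.le)
    have hgm := Real.geom_mean_le_arith_mean_weighted Finset.univ ω
      (fun i => q (a i * s) / (ω i * q s)) (fun i _ => hω i)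
      (by rw [Fin.sum_univ_three]; exact hωs) (fun i _ => hz i)
    refine hgm.trans ?_
    have hi : ∀ i, ω i * (q (a i * s) / (ω i * q s)) ≤ q (a i * s) / q s := fun i => by
      rcases (hω i).eq_or_lt with h | h
      · rw [← h, zero_mul]; exact (div_pos (hqa i) hqs).le
      · apply le_of_eq; field_simp
    refine (Finset.sum_le_sum fun i _ => hi i).trans ?_
    rw [Fin.sum_univ_three, mul_comm s, mul_comm s, mul_comm s, add_div, add_div]
  -- second factor
  have hF2 : (∏ i, (lam i * s / (a i * s * c i)) ^ (lam i)) = L := by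
    have hi : ∀ i, lam i * s / (a i * s * c i) = L := fun i => by
      have h1 : a i * s * c i = (lam i / L) * s := by rw [← hac i]; ring
      rw [h1]
      have := (hlam i).ne'
      field_simp
    simp only [hi]
    rw [Fin.prod_univ_three, ← Real.rpow_add hL, ← Real.rpow_add hL, hlamsum, Real.rpow_one]
  have hF2' : 1 / (a 0 * c 0 + a 1 * c 1 + a 2 * c 2) = L := by
    rw [hac, hac, hac, ← add_div, ← add_div, hlamsum, one_div_one_div]
  have hF3 := r_rpow_le k γ hγ (c 0) (c 1) (c 2) (hc 0) (hc 1) (hc 2)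
  unfold Psi OPT
  simp only
  rw [hF2, hF2', hQs]
  have hr0 := r_nonneg k (c 0) (c 1) (c 2) (hc 0) (hc 1) (hc 2)
  have hA0 : 0 ≤ (q (s * a 0) + q (s * a 1) + q (s * a 2)) / q s := by
    have := hqa 0; have := hqa 1; have := hqa 2
    rw [mul_comm s, mul_comm s, mul_comm s]; positivity
  refine (mul_le_mul (mul_le_mul_of_nonneg_right hF1 (by positivity)) hF3
    (by positivity) (by positivity)).trans (le_of_eq ?_)
  ring
end
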